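/- arXiv:1101.3299 — 4 statements merged into one kernel-verified Lean document; each statement's English description precedes it below -/
import Mathlib

section
/- For every n ≥ 2, every polynomial vector field on ℂⁿ is a finite sum of complete polynomial vector fields. -/
/-! Shears, overshears and monomial multiples of diagonal linear fields already span all polynomial
vector fields.

All three kinds have the form `h • L`, where `L` has an explicit entire flow and the polynomial `h`
is a first integral of `L`; then `(t, z) ↦ φ (t * h z, z)` is the flow of `h • L`
(`isCompleteVF_smul`). By linearity it is enough to treat a monomial field `m x^k y^l ∂_x`, where
`x`, `y` are two distinct coordinates and `m` is a monomial in the remaining ones.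

* For `k = 0` it is a shear, and for `k = 1` it is an overshear.
* For `k = q + 2`, two fields of the form `m x^(q+1) y^l (a x ∂_x + b y ∂_y)` lie in the span.
  One has `(a, b) = (l, -(q+1))`: it is complete because `x^(q+1) y^l` is a first integral of
  `l x ∂_x - (q+1) y ∂_y`. The other is, up to sign, the coefficient of `s^(q+1)` in the family of
  overshears `m (y - s x)^d x (∂_x + s ∂_y)` with `d = q + 1 + l`, and has
  `(a, b) = (C(d, q+1), -C(d, q))`. Since `(q+1) C(d, q+1) = (l+1) C(d, q)`, the two coefficient
  vectors are linearly independent, so `m x^(q+2) y^l ∂_x` is a combination of the two fields.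

Coefficients of a polynomial family in a subspace lie in the subspace: a linear functional killing
the subspace turns the family into a polynomial in `s` vanishing identically. -/

noncomputable section

/-- A polynomial vector field on ℂⁿ: each component is a polynomial in the coordinates. -/
def IsPolyVF (n : ℕ) (V : (Fin n → ℂ) → (Fin n → ℂ)) : Prop :=
  ∃ p : Fin n → MvPolynomial (Fin n) ℂ, ∀ z i, V z i = MvPolynomial.eval z (p i)

/-- A vector field on ℂⁿ is complete (ℂ-complete) if its flow exists for all complex
times: there is a holomorphic map `Φ : ℂ × ℂⁿ → ℂⁿ` with `Φ(0,z) = z` and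
`∂Φ/∂t(t,z) = V(Φ(t,z))`. -/
def IsCompleteVF (n : ℕ) (V : (Fin n → ℂ) → (Fin n → ℂ)) : Prop :=
  ∃ Φ : ℂ × (Fin n → ℂ) → (Fin n → ℂ),
    Differentiable ℂ Φ ∧ (∀ z, Φ (0, z) = z) ∧
    ∀ t z, HasDerivAt (fun s => Φ (s, z)) (V (Φ (t, z))) t

/-- A function on ℂⁿ given by a polynomial. -/
def IsPolyFun (n : ℕ) (f : (Fin n → ℂ) → ℂ) : Prop :=
  ∃ p : MvPolynomial (Fin n) ℂ, ∀ z, f z = MvPolynomial.eval z p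

namespace IsPolyFun

variable {n : ℕ} {f g : (Fin n → ℂ) → ℂ}

lemma const (c : ℂ) : IsPolyFun n (fun _ => c) := ⟨MvPolynomial.C c, by simp⟩

lemma coord (i : Fin n) : IsPolyFun n (fun z => z i) := ⟨MvPolynomial.X i, by simp⟩

lemma add (hf : IsPolyFun n f) (hg : IsPolyFun n g) : IsPolyFun n (fun z => f z + g z) := by
  obtain ⟨p, hp⟩ := hf
  obtain ⟨q, hq⟩ := hg
  exact ⟨p + q, by simp [hp, hq]⟩

lemma mul (hf : IsPolyFun n f) (hg : IsPolyFun n g) : IsPolyFun n (fun z => f z * g z) := by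
  obtain ⟨p, hp⟩ := hf
  obtain ⟨q, hq⟩ := hg
  exact ⟨p * q, by simp [hp, hq]⟩

lemma pow (hf : IsPolyFun n f) (k : ℕ) : IsPolyFun n (fun z => f z ^ k) := by
  obtain ⟨p, hp⟩ := hf
  exact ⟨p ^ k, by simp [hp]⟩

lemma sub (hf : IsPolyFun n f) (hg : IsPolyFun n g) : IsPolyFun n (fun z => f z - g z) := by
  obtain ⟨p, hp⟩ := hf
  obtain ⟨q, hq⟩ := hg
  exact ⟨p - q, by simp [hp, hq]⟩

lemma single (hf : IsPolyFun n f) (i a : Fin n) :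
    IsPolyFun n (fun z => (Pi.single i (f z) : Fin n → ℂ) a) := by
  rcases eq_or_ne a i with rfl | h
  · simpa using hf
  · simpa [Pi.single_eq_of_ne h] using const 0

end IsPolyFun

lemma isPolyVF_of_components {n : ℕ} {W : (Fin n → ℂ) → Fin n → ℂ}
    (h : ∀ i, IsPolyFun n (fun z => W z i)) : IsPolyVF n W := by
  choose p hp using h
  exact ⟨p, fun z i => hp i z⟩

lemma isPolyVF_const_smul {n : ℕ} {W : (Fin n → ℂ) → Fin n → ℂ} (c : ℂ) (hW : IsPolyVF n W) :
    IsPolyVF n (c • W) := by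
  obtain ⟨p, hp⟩ := hW
  exact ⟨fun i => MvPolynomial.C c * p i, by simp [hp]⟩

/-- If `L` has entire flow `φ` and `h` is constant along that flow, then `h • L` is complete: its
flow is the flow of `L` with time rescaled by `h` on each orbit. -/
lemma isCompleteVF_smul {n : ℕ} {L : (Fin n → ℂ) → Fin n → ℂ} {h : (Fin n → ℂ) → ℂ}
    (φ : ℂ × (Fin n → ℂ) → Fin n → ℂ) (hφ : Differentiable ℂ φ) (h0 : ∀ z, φ (0, z) = z)
    (hd : ∀ t z, HasDerivAt (fun s => φ (s, z)) (L (φ (t, z))) t)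
    (hh : Differentiable ℂ h) (hinv : ∀ t z, h (φ (t, z)) = h z) :
    IsCompleteVF n (fun z => h z • L z) := by
  refine ⟨fun p => φ (p.1 * h p.2, p.2), by fun_prop, by simp [h0], fun t z => ?_⟩
  have h1 : HasDerivAt (fun s : ℂ => s * h z) (h z) t := by
    simpa using (hasDerivAt_id t).mul_const (h z)
  have h2 := (hd (t * h z) z).scomp t h1
  simpa [hinv, Function.comp_def] using h2

lemma isCompleteVF_const_smul {n : ℕ} {W : (Fin n → ℂ) → Fin n → ℂ} (c : ℂ)
    (hW : IsCompleteVF n W) : IsCompleteVF n (c • W) := by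
  obtain ⟨Φ, h1, h2, h3⟩ := hW
  exact isCompleteVF_smul (h := fun _ => c) Φ h1 h2 h3 (by fun_prop) (by simp)

/-- The linear span of the complete polynomial vector fields on ℂⁿ. -/
def completeSpan (n : ℕ) : Submodule ℂ ((Fin n → ℂ) → Fin n → ℂ) :=
  Submodule.span ℂ {W | IsPolyVF n W ∧ IsCompleteVF n W}

/-- The coefficients of a polynomial family of vectors lying in a subspace lie in that subspace. -/
lemma coeff_mem_of_forall_sum_mem {M : Type*} [AddCommGroup M] [Module ℂ M] (S : Submodule ℂ M)
    (N : ℕ) (A : ℕ → M) (h : ∀ s : ℂ, ∑ p ∈ Finset.range N, s ^ p • A p ∈ S) (k : ℕ) (hk : k < N) :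
    A k ∈ S := by
  by_contra hA
  obtain ⟨f, hf, hS⟩ := Submodule.exists_le_ker_of_notMem hA
  have hP : (∑ p ∈ Finset.range N, Polynomial.monomial p (f (A p)) : Polynomial ℂ) = 0 := by
    refine Polynomial.funext fun s => ?_
    have := LinearMap.mem_ker.mp (hS (h s))
    simpa [Polynomial.eval_finsetSum, mul_comm] using this
  have := congrArg (fun P => Polynomial.coeff P k) hP
  simp [Polynomial.coeff_monomial, hk] at this
  exact hf this

section TwoCoordinates

variable {n : ℕ} {i j : Fin n} {g : (Fin n → ℂ) → ℂ}

lemma shear_mem (hij : i ≠ j) (hgd : Differentiable ℂ g) (hgp : IsPolyFun n g)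
    (hg : ∀ z w, (∀ a, a ≠ i → a ≠ j → z a = w a) → g z = g w) (l : ℕ) :
    (fun z => Pi.single i (z j ^ l * g z)) ∈ completeSpan n := by
  refine Submodule.subset_span
    ⟨isPolyVF_of_components fun a => (((IsPolyFun.coord j).pow l).mul hgp).single i a, ?_⟩
  have := isCompleteVF_smul (L := fun _ => Pi.single i 1) (h := fun z => z j ^ l * g z)
    (fun p => p.2 + p.1 • (Pi.single i 1 : Fin n → ℂ)) (by fun_prop) (by simp)
    (fun t z => by
      simpa using ((hasDerivAt_id t).smul_const (Pi.single i 1 : Fin n → ℂ)).const_add z)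
    (by fun_prop)
    (fun t z => by
      have : g (z + t • (Pi.single i 1 : Fin n → ℂ)) = g z :=
        hg _ _ fun a ha _ => by simp [Pi.single_eq_of_ne ha]
      simp [this, Pi.single_eq_of_ne hij.symm])
  convert this using 2 with z
  rw [← Pi.single_smul]; simp

/-- The overshear `g (y - s x)^d x (∂_x + s ∂_y)`, where `x`, `y` are the coordinates `i`, `j`. -/
lemma overshear_mem (hij : i ≠ j) (hgd : Differentiable ℂ g) (hgp : IsPolyFun n g)
    (hg : ∀ z w, (∀ a, a ≠ i → a ≠ j → z a = w a) → g z = g w) (s : ℂ) (d : ℕ) :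
    (fun z => ((z j - s * z i) ^ d * g z) • (z i • (Pi.single i 1 + Pi.single j s : Fin n → ℂ)))
      ∈ completeSpan n := by
  set v : Fin n → ℂ := Pi.single i 1 + Pi.single j s with hv
  have hvi : v i = 1 := by simp [hv, Pi.single_eq_of_ne hij]
  have hvj : v j = s := by simp [hv, Pi.single_eq_of_ne hij.symm]
  refine Submodule.subset_span ⟨isPolyVF_of_components fun a => ?_, ?_⟩
  · exact (((((IsPolyFun.coord j).sub ((IsPolyFun.const s).mul (IsPolyFun.coord i))).pow d).mul
      hgp).mul ((IsPolyFun.coord i).mul (IsPolyFun.const (v a))))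
  · refine isCompleteVF_smul (L := fun z => z i • v)
      (fun p => p.2 + ((Complex.exp p.1 - 1) * p.2 i) • v) (by fun_prop) (by simp)
      (fun t z => ?_) (by fun_prop) (fun t z => ?_)
    · have h1 : HasDerivAt (fun s => (Complex.exp s - 1) * z i) (Complex.exp t * z i) t :=
        ((Complex.hasDerivAt_exp t).sub_const 1).mul_const (z i)
      have e : (z + ((Complex.exp t - 1) * z i) • v) i • v = (Complex.exp t * z i) • v := by
        congr 1
        simp only [Pi.add_apply, Pi.smul_apply, hvi, smul_eq_mul]; ring
      rw [e]
      exact (h1.smul_const v).const_add z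
    · have : g (z + ((Complex.exp t - 1) * z i) • v) = g z :=
        hg _ _ fun a ha hb => by simp [hv, Pi.single_eq_of_ne ha, Pi.single_eq_of_ne hb]
      simp only [this, Pi.add_apply, Pi.smul_apply, hvi, hvj, smul_eq_mul]
      congr 2; ring

/-- The field `g x^k y^l (l x ∂_x - k y ∂_y)`, where `x`, `y` are the coordinates `i`, `j`. -/
lemma diagonal_mem (hij : i ≠ j) (hgd : Differentiable ℂ g) (hgp : IsPolyFun n g)
    (hg : ∀ z w, (∀ a, a ≠ i → a ≠ j → z a = w a) → g z = g w) (k l : ℕ) :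
    (fun z => (z i ^ k * z j ^ l * g z) •
      (Pi.single i (l * z i) - Pi.single j (k * z j) : Fin n → ℂ)) ∈ completeSpan n := by
  refine Submodule.subset_span ⟨isPolyVF_of_components fun a => ?_, ?_⟩
  · exact ((((IsPolyFun.coord i).pow k).mul ((IsPolyFun.coord j).pow l)).mul hgp).mul
      ((((IsPolyFun.const _).mul (IsPolyFun.coord i)).single i a).sub
        (((IsPolyFun.const _).mul (IsPolyFun.coord j)).single j a))
  · set c : Fin n → ℂ := Pi.single i (l : ℂ) - Pi.single j (k : ℂ) with hc
    have hci : c i = l := by simp [hc, Pi.single_eq_of_ne hij]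
    have hcj : c j = -k := by simp [hc, Pi.single_eq_of_ne hij.symm]
    have hL : ∀ z : Fin n → ℂ,
        (Pi.single i (l * z i) - Pi.single j (k * z j) : Fin n → ℂ) = fun a => c a * z a := by
      intro z
      ext a
      rcases eq_or_ne a i with rfl | ha
      · simp [hc, Pi.single_eq_of_ne hij]
      · rcases eq_or_ne a j with rfl | hb
        · simp [hc, Pi.single_eq_of_ne ha]
        · simp [hc, Pi.single_eq_of_ne ha, Pi.single_eq_of_ne hb]
    simp only [hL]
    refine isCompleteVF_smul (h := fun z => z i ^ k * z j ^ l * g z) (L := fun z a => c a * z a)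
      (fun p a => p.2 a * Complex.exp (c a * p.1))
      (differentiable_pi.mpr fun a => by fun_prop) (by simp)
      (fun t z => ?_) (by fun_prop) (fun t z => ?_)
    · refine hasDerivAt_pi.mpr fun a => ?_
      have h1 : HasDerivAt (fun s : ℂ => c a * s) (c a) t := by
        simpa using (hasDerivAt_id t).const_mul (c a)
      exact (h1.cexp.const_mul (z a)).congr_deriv (by ring)
    · have hz : g (fun a => z a * Complex.exp (c a * t)) = g z :=
        hg _ _ fun a ha hb => by simp [hc, Pi.single_eq_of_ne ha, Pi.single_eq_of_ne hb]
      have he : Complex.exp (l * t) ^ k * Complex.exp (-k * t) ^ l = 1 := by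
        rw [← Complex.exp_nat_mul, ← Complex.exp_nat_mul, ← Complex.exp_add, ← Complex.exp_zero]
        congr 1; ring
      simp only [hz, hci, hcj, mul_pow]
      linear_combination (z i ^ k * z j ^ l * g z) * he

/-- The coefficient of `s^(q+1)` in the family of overshears, up to the sign `(-1)^(q+1)`. -/
lemma overshear_coeff_mem (hij : i ≠ j) (hgd : Differentiable ℂ g) (hgp : IsPolyFun n g)
    (hg : ∀ z w, (∀ a, a ≠ i → a ≠ j → z a = w a) → g z = g w) (q l : ℕ) :
    (fun z => (z i ^ (q + 1) * z j ^ l * g z) •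
      (Pi.single i ((q + 1 + l).choose (q + 1) * z i) -
        Pi.single j ((q + 1 + l).choose q * z j) : Fin n → ℂ)) ∈ completeSpan n := by
  set d := q + 1 + l with hd
  -- `B p` is the coefficient of `s^p` in `g (y - s x)^d x`.
  let B : ℕ → (Fin n → ℂ) → ℂ := fun p z =>
    (-1) ^ p * (z i ^ p * z j ^ (d - p) * (d.choose p : ℂ)) * g z * z i
  let A : ℕ → (Fin n → ℂ) → Fin n → ℂ := fun p z =>
    Pi.single i (B p z) + (if p = 0 then 0 else Pi.single j (B (p - 1) z))
  have hB : ∀ (s : ℂ) z, ∑ p ∈ Finset.range (d + 1), s ^ p * B p z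
      = (z j - s * z i) ^ d * g z * z i := by
    intro s z
    have : z j - s * z i = -(s * z i) + z j := by ring
    rw [this, add_pow, Finset.sum_mul, Finset.sum_mul]
    refine Finset.sum_congr rfl fun p _ => ?_
    simp only [B]
    rw [neg_pow (s * z i), mul_pow]; ring
  have hBd : ∀ z, B (d + 1) z = 0 := fun z => by simp [B]
  have key := coeff_mem_of_forall_sum_mem (completeSpan n) (d + 2) A (fun s => by
    convert overshear_mem hij hgd hgp hg s d using 1
    ext z a
    have h1 : ∑ p ∈ Finset.range (d + 2), s ^ p * (Pi.single i (B p z) : Fin n → ℂ) a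
        = (Pi.single i ((z j - s * z i) ^ d * g z * z i) : Fin n → ℂ) a := by
      rw [← hB, Finset.sum_range_succ]
      rcases eq_or_ne a i with rfl | ha
      · simp [hBd]
      · simp [Pi.single_eq_of_ne ha]
    have h2 : ∑ p ∈ Finset.range (d + 2),
          s ^ p * (if p = 0 then 0 else Pi.single j (B (p - 1) z) : Fin n → ℂ) a
        = (Pi.single j (s * ((z j - s * z i) ^ d * g z * z i)) : Fin n → ℂ) a := by
      rw [← hB, Finset.sum_range_succ', Finset.mul_sum]
      rcases eq_or_ne a j with rfl | ha
      · simp [pow_succ', mul_assoc]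
      · simp [Pi.single_eq_of_ne ha]
    simp only [Finset.sum_apply, Pi.smul_apply, A, Pi.add_apply, smul_eq_mul, mul_add,
      Finset.sum_add_distrib, h1, h2]
    congr 1
    · rcases eq_or_ne a i with rfl | ha
      · simp [mul_assoc]
      · simp [Pi.single_eq_of_ne ha]
    · rcases eq_or_ne a j with rfl | ha
      · simp only [Pi.single_eq_same]; ring
      · simp [Pi.single_eq_of_ne ha]) (q + 1) (by omega)
  convert (completeSpan n).smul_mem ((-1) ^ (q + 1)) key using 1
  have e1 : d - (q + 1) = l := by omega
  have e2 : d - q = l + 1 := by omega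
  have e3 : ((-1 : ℂ) ^ q) ^ 2 = 1 := by rw [← pow_mul, mul_comm, pow_mul]; simp
  ext z a
  simp only [Pi.smul_apply, A, B, Pi.add_apply, Pi.sub_apply, smul_eq_mul, Nat.add_sub_cancel, e1,
    e2, Nat.add_eq_zero_iff, one_ne_zero, and_false, if_false, mul_add]
  rw [sub_eq_add_neg, mul_add]
  congr 1
  · rcases eq_or_ne a i with rfl | ha
    · simp only [Pi.single_eq_same]
      linear_combination (-(z a ^ (q + 1) * z j ^ l * g z * d.choose (q + 1) * z a)) * e3
    · simp [Pi.single_eq_of_ne ha]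
  · rcases eq_or_ne a j with rfl | ha
    · simp only [Pi.single_eq_same]
      linear_combination ((z i ^ (q + 1) * z a ^ l * g z * d.choose q * z a)) * e3
    · simp [Pi.single_eq_of_ne ha]

lemma monomial_mem (hij : i ≠ j) (hgd : Differentiable ℂ g) (hgp : IsPolyFun n g)
    (hg : ∀ z w, (∀ a, a ≠ i → a ≠ j → z a = w a) → g z = g w) (k l : ℕ) :
    (fun z => Pi.single i (z i ^ k * z j ^ l * g z)) ∈ completeSpan n := by
  match k with
  | 0 => simpa using shear_mem hij hgd hgp hg l
  | 1 =>
    convert overshear_mem hij hgd hgp hg 0 l using 2 with z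
    ext a
    rcases eq_or_ne a i with rfl | ha
    · simp; ring
    · simp [Pi.single_eq_of_ne ha]
  | q + 2 =>
    have hc : ((q + 1 + l).choose (q + 1) : ℂ) * (q + 1) = (q + 1 + l).choose q * (l + 1) := by
      have := Nat.choose_succ_right_eq (q + 1 + l) q
      rw [show q + 1 + l - q = l + 1 by omega] at this
      exact_mod_cast this
    have hne : ((q + 1 + l).choose q : ℂ) ≠ 0 := by
      exact_mod_cast (Nat.choose_pos (by omega)).ne'
    have h1 := (completeSpan n).smul_mem ((q : ℂ) + 1) (overshear_coeff_mem hij hgd hgp hg q l)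
    have h2 := (completeSpan n).smul_mem ((q + 1 + l).choose q : ℂ)
      (diagonal_mem hij hgd hgp hg (q + 1) l)
    have h3 := (completeSpan n).smul_mem ((q + 1 + l).choose q : ℂ)⁻¹
      ((completeSpan n).sub_mem h1 h2)
    convert h3 using 1
    ext z a
    simp only [Pi.smul_apply, Pi.sub_apply, smul_eq_mul]
    rw [eq_inv_mul_iff_mul_eq₀ hne]
    rcases eq_or_ne a i with rfl | ha
    · simp only [Pi.single_eq_same, Pi.single_eq_of_ne hij]
      linear_combination (-(z a ^ (q + 2) * z j ^ l * g z)) * hc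
    · rcases eq_or_ne a j with rfl | hb
      · simp only [Pi.single_eq_same, Pi.single_eq_of_ne ha]
        push_cast; ring
      · simp [Pi.single_eq_of_ne ha, Pi.single_eq_of_ne hb]

end TwoCoordinates

lemma mem_completeSpan_of_isPolyVF {n : ℕ} (hn : 2 ≤ n) {V : (Fin n → ℂ) → Fin n → ℂ}
    (hV : IsPolyVF n V) : V ∈ completeSpan n := by
  obtain ⟨p, hp⟩ := hV
  have hVsum : V = ∑ i, ∑ β ∈ (p i).support,
      (p i).coeff β • fun z : Fin n → ℂ => (Pi.single i (∏ a, z a ^ β a) : Fin n → ℂ) := by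
    ext z b
    simp only [Finset.sum_apply, Pi.smul_apply, smul_eq_mul]
    rw [Finset.sum_eq_single b, hp, MvPolynomial.eval_eq']
    · simp
    · intro i _ hi
      simp [Pi.single_eq_of_ne hi.symm]
    · simp
  rw [hVsum]
  refine Submodule.sum_mem _ fun i _ => Submodule.sum_mem _ fun β _ => Submodule.smul_mem _ _ ?_
  have : Nontrivial (Fin n) := Fin.nontrivial_iff_two_le.mpr hn
  obtain ⟨j, hji⟩ := exists_ne i
  set T : Finset (Fin n) := (Finset.univ.erase i).erase j with hT
  convert monomial_mem (i := i) (j := j) (g := fun z => ∏ a ∈ T, z a ^ β a) hji.symm (by fun_prop)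
    ⟨∏ a ∈ T, MvPolynomial.X a ^ β a, by simp [map_prod]⟩
    (fun z w h => Finset.prod_congr rfl fun a ha => by
      rw [h a (by simp_all) (by simp_all)]) (β i) (β j) using 3 with z
  rw [← Finset.mul_prod_erase Finset.univ _ (Finset.mem_univ i),
    ← Finset.mul_prod_erase (Finset.univ.erase i) _ (Finset.mem_erase.mpr ⟨hji, Finset.mem_univ j⟩),
    mul_assoc]

/-- For `n ≥ 2`, every polynomial vector field on ℂⁿ is a finite sum of complete
polynomial vector fields. -/
theorem stmt5 (n : ℕ) (hn : 2 ≤ n) (V : (Fin n → ℂ) → (Fin n → ℂ))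
    (hV : IsPolyVF n V) :
    ∃ (m : ℕ) (W : Fin m → (Fin n → ℂ) → (Fin n → ℂ)),
      (∀ i, IsPolyVF n (W i) ∧ IsCompleteVF n (W i)) ∧
      V = fun z => ∑ i, W i z := by
  obtain ⟨m, c, W, hW⟩ := Submodule.mem_span_set'.mp (mem_completeSpan_of_isPolyVF hn hV)
  refine ⟨m, fun i => c i • (W i : (Fin n → ℂ) → Fin n → ℂ), fun i =>
    ⟨isPolyVF_const_smul _ (W i).2.1, isCompleteVF_const_smul _ (W i).2.2⟩, ?_⟩
  rw [← hW]
  ext z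
  simp
end
end

section
/- There exists an injective holomorphic map θ : ℂ² → ℂ² such that θ(ℂ²) ⊆ ℂ*×ℂ and θ(ℂ²) is Runge in ℂ². (In particular, θ is a Fatou–Bieberbach map: a biholomorphism of ℂ² onto a proper subdomain of ℂ².) -/
/-!
The domain is a basin of attraction. Take an automorphism `G` of `ℂ²` with an attracting fixed point
whose derivative there is `1/4`, and which maps a line `L` missing that point to itself. The basin
of the fixed point then avoids `L`. It is biholomorphic to `ℂ²`: near the fixed point,
`φ = lim 4ⁿ Gⁿ` linearizes `G` (`exists_linearization`), and `θ x = G⁻ⁿ (φ⁻¹ (4⁻ⁿ x))`, with `n`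
large, extends `φ⁻¹` to an injective holomorphic map onto the basin (`exists_parametrization`).
The basin is Runge because it is exhausted by the sets `G⁻ⁿ(ball)`, which are images of a ball under
automorphisms of `ℂ²` (`isRunge2_basin`); this rests on polynomial approximation on bidiscs
(`poly_approx`), a consequence of the Cauchy formula.

The map `G` is the square of `(a, b) ↦ ((1 + a) e^w - 1, w)`, `w = -(3a + b)/4`, which maps the line
`a = -1` to itself and whose derivative at the origin squares to `1/4`. Translating by `(1, 0)`
moves that line to `{z₁ = 0}`.
-/

open Set

noncomputable section

/-- ℂ² with the Euclidean norm. -/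
abbrev E2 : Type := EuclideanSpace ℂ (Fin 2)

/-- ℂ*×ℂ, i.e. the set of points of ℂ² with nonzero first coordinate. -/
def OmegaStar : Set E2 := {z : E2 | z 0 ≠ 0}

/-- An open set `Ω ⊆ ℂ²` is Runge in ℂ²: every holomorphic function on `Ω` can be
approximated uniformly on compact subsets of `Ω` by polynomials. -/
def IsRunge2 (Ω : Set E2) : Prop :=
  IsOpen Ω ∧
  ∀ f : E2 → ℂ, DifferentiableOn ℂ f Ω →
    ∀ K : Set E2, IsCompact K → K ⊆ Ω →
      ∀ ε : ℝ, 0 < ε → ∃ p : MvPolynomial (Fin 2) ℂ,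
        ∀ z ∈ K, ‖f z - MvPolynomial.eval (fun i => z i) p‖ < ε

open Metric Filter Topology

/-! ### Polynomial approximation on bidiscs -/

/-- A closed subalgebra of `C(Y, ℂ)` is stable under the functional calculus `X ↦ h ∘ X` for `h`
holomorphic on a disc about `0` whose radius exceeds `‖X‖`: the Taylor polynomials of `h` converge uniformly. -/
lemma comp_mem_closed {Y : Type*} [TopologicalSpace Y] [CompactSpace Y]
    (S : Subalgebra ℂ C(Y, ℂ)) (hS : IsClosed (S : Set C(Y, ℂ))) {h : ℂ → ℂ} {r R : ℝ}
    (hr : 0 < r) (hrR : r < R) (hh : DifferentiableOn ℂ h (ball 0 R)) {X g : C(Y, ℂ)}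
    (hX : X ∈ S) (hXr : ∀ y, ‖X y‖ ≤ r) (hg : ∀ y, g y = h (X y)) : g ∈ S := by
  obtain ⟨ρ, hrρ, hρR⟩ := exists_between hrR
  obtain ⟨s, hrs, hsρ⟩ := exists_between hrρ
  have hρ : 0 < ρ := hr.trans hrρ
  have hs : 0 < s := hr.trans hrs
  lift ρ to NNReal using hρ.le
  lift s to NNReal using hs.le
  have hps := DifferentiableOn.hasFPowerSeriesOnBall (R := ρ) (c := (0 : ℂ)) (f := h)
    (hh.mono (closedBall_subset_ball hρR)) hρ
  have hu := hps.tendstoUniformlyOn' (r' := s) (by exact_mod_cast hsρ)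
  rw [Metric.tendstoUniformlyOn_iff] at hu
  have : g ∈ closure (S : Set C(Y, ℂ)) := by
    rw [Metric.mem_closure_iff]
    intro ε hε
    obtain ⟨n, hn⟩ := (hu (ε / 2) (half_pos hε)).exists
    refine ⟨∑ k ∈ Finset.range n, (cauchyPowerSeries h 0 ρ).coeff k • X ^ k,
      S.sum_mem fun k _ => S.smul_mem (S.pow_mem hX k) _, ?_⟩
    refine lt_of_le_of_lt ((ContinuousMap.dist_le (half_pos hε).le).2 fun y => ?_) (half_lt_self hε)
    have := hn (X y) (by simpa using (hXr y).trans_lt hrs)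
    rw [FormalMultilinearSeries.partialSum] at this
    simp only [FormalMultilinearSeries.apply_eq_pow_smul_coeff, sub_zero] at this
    rw [hg]
    refine le_of_eq_of_le ?_ this.le
    congr 1
    simp [ContinuousMap.sum_apply, mul_comm]
  rwa [hS.closure_eq] at this

lemma integral_mem_closed {B : Type*} [NormedAddCommGroup B] [NormedSpace ℂ B] [CompleteSpace B]
    (S : Submodule ℂ B) (hS : IsClosed (S : Set B)) {Φ : ℝ → B} (hc : Continuous Φ)
    (hΦ : ∀ t, Φ t ∈ S) (a b : ℝ) : (∫ t in a..b, Φ t) ∈ S := by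
  have : CompleteSpace S := hS.completeSpace_coe
  have hc' : Continuous fun t => (⟨Φ t, hΦ t⟩ : S) := hc.subtype_mk _
  have := S.subtypeL.intervalIntegral_comp_comm (hc'.intervalIntegrable (μ := MeasureTheory.volume) a b)
  simp only [Submodule.subtypeL_apply] at this
  rw [this]
  exact Subtype.coe_prop _

/-- Holomorphic functions on a bidisc are uniformly approximable by polynomials on smaller
bidiscs. The Cauchy formula in the second variable writes `f` as an integral, with values in
`C(K, ℂ)`, of the functions `f(·, ζ) (ζ - ·)⁻¹`; each of these is a product of two functions of one
variable, so it lies in the closure of the polynomials, and hence so does the integral. -/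
lemma poly_approx {f : E2 → ℂ} {r R : ℝ} (hr : 0 < r) (hrR : r < R)
    (hf : DifferentiableOn ℂ f {z | ‖z 0‖ < R ∧ ‖z 1‖ < R}) {K : Set E2} (hK : IsCompact K)
    (hKr : ∀ z ∈ K, ‖z 0‖ ≤ r ∧ ‖z 1‖ ≤ r) {ε : ℝ} (hε : 0 < ε) :
    ∃ p : MvPolynomial (Fin 2) ℂ, ∀ z ∈ K, ‖f z - MvPolynomial.eval (fun i => z i) p‖ < ε := by
  have : CompactSpace K := isCompact_iff_compactSpace.1 hK
  obtain ⟨ρ, hrρ, hρR⟩ := exists_between hrR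
  have hρ : 0 < ρ := hr.trans hrρ
  let X : Fin 2 → C(K, ℂ) := fun i => ⟨fun z => z.1 i, by fun_prop⟩
  let P : MvPolynomial (Fin 2) ℂ →ₐ[ℂ] C(K, ℂ) := MvPolynomial.aeval X
  have hP : ∀ p (z : K), P p z = MvPolynomial.eval (fun i => z.1 i) p := by
    intro p z
    have h : (ContinuousMap.evalAlgHom ℂ ℂ z).comp P = MvPolynomial.aeval (fun i => z.1 i) := by
      apply MvPolynomial.algHom_ext
      intro i
      simp [P, X]
    have := DFunLike.congr_fun h p
    simpa [MvPolynomial.aeval_eq_eval] using this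
  let S := P.range.topologicalClosure
  have hSc : IsClosed (S : Set C(K, ℂ)) := P.range.isClosed_topologicalClosure
  have hXS : ∀ i, X i ∈ S := fun i =>
    P.range.le_topologicalClosure ⟨MvPolynomial.X i, by simp [P]⟩
  -- the circle over which the Cauchy formula is applied
  let c : ℝ → ℂ := circleMap 0 ρ
  have hcn : ∀ t, ‖c t‖ = ρ := fun t => by simp [c, abs_of_pos hρ]
  have hcc : Continuous c := continuous_circleMap 0 ρ
  have hne : ∀ t (z : K), c t - z.1 1 ≠ 0 := fun t z h => by
    have h1 := hcn t
    rw [sub_eq_zero.1 h] at h1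
    linarith [(hKr z z.2).2]
  have hin : ∀ t (z : K), (!₂[z.1 0, c t] : E2) ∈ {z : E2 | ‖z 0‖ < R ∧ ‖z 1‖ < R} := fun t z => by
    simpa [hcn] using ⟨(hKr z z.2).1.trans_lt hrR, hρR⟩
  have hcont1 : Continuous fun q : ℝ × K => f !₂[q.2.1 0, c q.1] := by
    refine hf.continuousOn.comp_continuous (f := fun q : ℝ × K => (!₂[q.2.1 0, c q.1] : E2)) ?_
      fun q => hin q.1 q.2
    refine (PiLp.continuous_toLp 2 _).comp (continuous_pi fun i => ?_)
    fin_cases i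
    · simp; fun_prop
    · simp; fun_prop
  have hcont2 : Continuous fun q : ℝ × K => (c q.1 - q.2.1 1)⁻¹ :=
    Continuous.inv₀ (by fun_prop) fun q => hne q.1 q.2
  let G1 : C(ℝ, C(K, ℂ)) := ContinuousMap.curry ⟨_, hcont1⟩
  let G2 : C(ℝ, C(K, ℂ)) := ContinuousMap.curry ⟨_, hcont2⟩
  have hG1 : ∀ t, G1 t ∈ S := fun t => by
    refine comp_mem_closed S hSc (h := fun w => f !₂[w, c t]) hr hrR ?_ (hXS 0)
      (fun z => (hKr z z.2).1) (fun z => rfl)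
    refine hf.comp (t := {z | ‖z 0‖ < R ∧ ‖z 1‖ < R}) (f := fun w => (!₂[w, c t] : E2)) ?_ ?_
    · refine Differentiable.differentiableOn ?_
      rw [differentiable_euclidean]
      intro i
      fin_cases i <;> simp
    · intro w hw
      simpa [hcn] using ⟨by simpa using hw, hρR⟩
  have hG2 : ∀ t, G2 t ∈ S := fun t => by
    refine comp_mem_closed S hSc (h := fun w => (c t - w)⁻¹) hr hrρ ?_ (hXS 1)
      (fun z => (hKr z z.2).2) (fun z => rfl)
    refine DifferentiableOn.inv (by fun_prop) fun w hw h => ?_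
    have h1 := hcn t
    rw [sub_eq_zero.1 h] at h1
    simp [h1] at hw
  let Φ : ℝ → C(K, ℂ) := fun t => deriv c t • (G2 t * G1 t)
  have hΦc : Continuous Φ := by
    have h1 : Continuous (deriv c) := by
      have : deriv c = fun t => circleMap 0 ρ t * Complex.I :=
        funext fun t => deriv_circleMap 0 ρ t
      rw [this]
      fun_prop
    exact h1.smul (G2.continuous.mul G1.continuous)
  have hΦS : ∀ t, Φ t ∈ S := fun t => S.smul_mem (S.mul_mem (hG2 t) (hG1 t)) _
  have hI := integral_mem_closed S.toSubmodule hSc hΦc hΦS 0 (2 * Real.pi)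
  have hI2 : (2 * Real.pi * Complex.I : ℂ)⁻¹ • (∫ t in (0 : ℝ)..(2 * Real.pi), Φ t) ∈ S :=
    S.smul_mem hI _
  have hval : ∀ z : K, ((2 * Real.pi * Complex.I : ℂ)⁻¹ • (∫ t in (0 : ℝ)..(2 * Real.pi), Φ t)) z
      = f z.1 := by
    intro z
    have hd : DifferentiableOn ℂ (fun w => f !₂[z.1 0, w]) (closedBall 0 ρ) := by
      refine hf.comp (t := {z | ‖z 0‖ < R ∧ ‖z 1‖ < R}) (f := fun w => (!₂[z.1 0, w] : E2)) ?_ ?_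
      · refine Differentiable.differentiableOn ?_
        rw [differentiable_euclidean]
        intro i
        fin_cases i <;> simp
      · intro w hw
        have hw' : ‖w‖ ≤ ρ := by simpa using hw
        simpa using ⟨(hKr z z.2).1.trans_lt hrR, hw'.trans_lt hρR⟩
    have hC := Complex.two_pi_I_inv_smul_circleIntegral_sub_inv_smul_of_differentiable_on_off_countable
      (s := ∅) countable_empty (w := z.1 1) (c := 0) (R := ρ)
      (by simpa using (hKr z z.2).2.trans_lt hrρ) hd.continuousOn
      (fun x hx => (hd.mono ball_subset_closedBall).differentiableAt (isOpen_ball.mem_nhds hx.1))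
    have hz : (!₂[z.1 0, z.1 1] : E2) = z.1 := by
      ext i; fin_cases i <;> simp
    rw [hz] at hC
    rw [← hC, ContinuousMap.smul_apply]
    congr 1
    have := (ContinuousMap.evalCLM ℂ z).intervalIntegral_comp_comm
      (hΦc.intervalIntegrable (μ := MeasureTheory.volume) 0 (2 * Real.pi))
    simp only [ContinuousMap.evalCLM_apply] at this
    rw [← this]
    rfl
  have hcl := Metric.mem_closure_iff.1 (show _ ∈ closure (P.range : Set C(K, ℂ)) from hI2) ε hε
  obtain ⟨b, ⟨p, rfl⟩, hb⟩ := hcl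
  refine ⟨p, fun z hz => ?_⟩
  have := (ContinuousMap.dist_apply_le_dist (⟨z, hz⟩ : K)).trans_lt hb
  rw [hval, dist_eq_norm] at this
  rw [← hP p ⟨z, hz⟩]
  exact this

/-! ### Linearization at an attracting fixed point -/

section Linearization

variable {E : Type*} [NormedAddCommGroup E] [NormedSpace ℂ E]

lemma iterate_mem_ball {E : Type*} [NormedAddCommGroup E] {G : E → E} (h0 : G 0 = 0) {r : ℝ}
    (hc : ∀ x ∈ ball (0 : E) r, ∀ y ∈ ball (0 : E) r, ‖G x - G y‖ ≤ 3 / 8 * ‖x - y‖) (n : ℕ)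
    {x : E} (hx : x ∈ ball (0 : E) r) : G^[n] x ∈ ball (0 : E) r := by
  induction n with
  | zero => simpa using hx
  | succ n ih =>
    have h1 := hc _ ih 0 (mem_ball_self (pos_of_mem_ball hx))
    rw [h0, sub_zero, sub_zero] at h1
    rw [Function.iterate_succ_apply']
    rw [mem_ball_zero_iff] at ih ⊢
    linarith [norm_nonneg (G^[n] x)]

lemma norm_iterate_sub_le {E : Type*} [NormedAddCommGroup E] {G : E → E} (h0 : G 0 = 0) {r : ℝ}
    (hc : ∀ x ∈ ball (0 : E) r, ∀ y ∈ ball (0 : E) r, ‖G x - G y‖ ≤ 3 / 8 * ‖x - y‖) (n : ℕ)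
    {x y : E} (hx : x ∈ ball (0 : E) r) (hy : y ∈ ball (0 : E) r) :
    ‖G^[n] x - G^[n] y‖ ≤ (3 / 8) ^ n * ‖x - y‖ := by
  induction n with
  | zero => simp
  | succ n ih =>
    rw [Function.iterate_succ_apply', Function.iterate_succ_apply', pow_succ]
    linarith [hc _ (iterate_mem_ball h0 hc n hx) _ (iterate_mem_ball h0 hc n hy)]

lemma norm_iterate_le {E : Type*} [NormedAddCommGroup E] {G : E → E} (h0 : G 0 = 0) {r : ℝ}
    (hc : ∀ x ∈ ball (0 : E) r, ∀ y ∈ ball (0 : E) r, ‖G x - G y‖ ≤ 3 / 8 * ‖x - y‖) (n : ℕ)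
    {x : E} (hx : x ∈ ball (0 : E) r) : ‖G^[n] x‖ ≤ (3 / 8) ^ n * ‖x‖ := by
  have h := norm_iterate_sub_le h0 hc n hx (mem_ball_self (pos_of_mem_ball hx))
  rwa [Function.iterate_fixed h0, sub_zero, sub_zero] at h

/-- Here `4G - id` is the defect of `G` from its linear part `id / 4`. The constant `3 / 8` serves
because `4 (3/8)² < 1`. -/
lemma contraction_of_defect {G : E → E} {K r : ℝ} (hKr : K * r ≤ 1 / 4)
    (hL : ∀ ρ ≤ r, ∀ x ∈ closedBall (0 : E) ρ ∩ ball 0 r, ∀ y ∈ closedBall (0 : E) ρ ∩ ball 0 r,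
      ‖((4 : ℂ) • G x - x) - ((4 : ℂ) • G y - y)‖ ≤ K * ρ * ‖x - y‖) :
    ∀ x ∈ ball (0 : E) r, ∀ y ∈ ball (0 : E) r, ‖G x - G y‖ ≤ 3 / 8 * ‖x - y‖ := by
  intro x hx y hy
  have h1 := hL r le_rfl x ⟨ball_subset_closedBall hx, hx⟩ y ⟨ball_subset_closedBall hy, hy⟩
  have h2 : (4 : ℂ) • (G x - G y) = (((4 : ℂ) • G x - x) - ((4 : ℂ) • G y - y)) + (x - y) := by
    rw [smul_sub]; abel
  have h3 : 4 * ‖G x - G y‖ = ‖(4 : ℂ) • (G x - G y)‖ := by rw [norm_smul]; norm_num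
  rw [h2] at h3
  have h4 := norm_add_le (((4 : ℂ) • G x - x) - ((4 : ℂ) • G y - y)) (x - y)
  have h5 : K * r * ‖x - y‖ ≤ 1 / 4 * ‖x - y‖ := by gcongr
  linarith [norm_nonneg (x - y)]

/-- Koenigs linearization: `φ = lim 4ⁿ Gⁿ` conjugates `G` to multiplication by `1/4` near the fixed
point. The limit is written as a telescoping series, whose `n`-th term has Lipschitz constant
`O((4 (3/8)²)ⁿ) = O((9/16)ⁿ)`, so that `φ - id` is a contraction and `φ` has a local inverse. -/
lemma exists_linearization [CompleteSpace E] {G : E → E} (hG : Differentiable ℂ G) (h0 : G 0 = 0)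
    {K r : ℝ} (hK : 0 ≤ K) (hr : 0 < r) (hKr : K * r ≤ 1 / 4)
    (hL : ∀ ρ ≤ r, ∀ x ∈ closedBall (0 : E) ρ ∩ ball 0 r, ∀ y ∈ closedBall (0 : E) ρ ∩ ball 0 r,
      ‖((4 : ℂ) • G x - x) - ((4 : ℂ) • G y - y)‖ ≤ K * ρ * ‖x - y‖) :
    ∃ φ : OpenPartialHomeomorph E E, φ.source = ball 0 r ∧ φ 0 = 0 ∧
      (∀ x ∈ ball 0 r, φ (G x) = (4 : ℂ)⁻¹ • φ x) ∧ DifferentiableOn ℂ φ.symm φ.target := by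
  have hc := contraction_of_defect hKr hL
  -- the telescoping terms `4ⁿ⁺¹ Gⁿ⁺¹ - 4ⁿ Gⁿ`
  let u : ℕ → E → E := fun n x => (4 : ℂ) ^ n • ((4 : ℂ) • G (G^[n] x) - G^[n] x)
  have hu0 : ∀ n, u n 0 = 0 := fun n => by
    simp [u, Function.iterate_fixed h0, h0]
  have hit : ∀ n, Differentiable ℂ G^[n] := fun n => hG.iterate n
  have hud : ∀ n, Differentiable ℂ (u n) := fun n =>
    ((((hG.comp (hit n)).const_smul (4 : ℂ)).sub (hit n)).const_smul _)
  have hul : ∀ n, ∀ x ∈ ball (0 : E) r, ∀ y ∈ ball (0 : E) r,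
      ‖u n x - u n y‖ ≤ 1 / 4 * (9 / 16) ^ n * ‖x - y‖ := by
    intro n x hx y hy
    have hin : ∀ z ∈ ball (0 : E) r, G^[n] z ∈ closedBall (0 : E) ((3 / 8) ^ n * r) ∩ ball 0 r := by
      intro z hz
      refine ⟨?_, iterate_mem_ball h0 hc n hz⟩
      rw [mem_closedBall_zero_iff]
      refine (norm_iterate_le h0 hc n hz).trans ?_
      rw [mem_ball_zero_iff] at hz
      gcongr
    have hle : (3 / 8 : ℝ) ^ n * r ≤ r :=
      mul_le_of_le_one_left hr.le (pow_le_one₀ (by norm_num) (by norm_num))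
    have h1 := hL _ hle _ (hin x hx) _ (hin y hy)
    have h2 := norm_iterate_sub_le h0 hc n hx hy
    calc ‖u n x - u n y‖ = 4 ^ n * ‖((4 : ℂ) • G (G^[n] x) - G^[n] x)
          - ((4 : ℂ) • G (G^[n] y) - G^[n] y)‖ := by
          simp only [u]
          rw [← smul_sub, norm_smul, norm_pow]; norm_num
      _ ≤ 4 ^ n * (K * ((3 / 8) ^ n * r) * ((3 / 8) ^ n * ‖x - y‖)) := by
          gcongr
          exact h1.trans (by gcongr)
      _ = (K * r) * (4 * (3 / 8) * (3 / 8)) ^ n * ‖x - y‖ := by rw [mul_pow, mul_pow]; ring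
      _ ≤ 1 / 4 * (9 / 16) ^ n * ‖x - y‖ := by
          norm_num only
          gcongr
  have hgs : HasSum (fun n : ℕ => (1 / 4 : ℝ) * (9 / 16) ^ n) (4 / 7) := by
    have := (hasSum_geometric_of_lt_one (r := (9 / 16 : ℝ)) (by norm_num) (by norm_num)).mul_left
      (1 / 4)
    norm_num at this ⊢
    exact this
  have hus : ∀ x ∈ ball (0 : E) r, Summable fun n => u n x := by
    intro x hx
    refine Summable.of_norm_bounded (hgs.summable.mul_right ‖x‖) fun n => ?_
    have := hul n x hx 0 (mem_ball_self hr)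
    rwa [hu0, sub_zero, sub_zero] at this
  let S : E → E := fun x => ∑' n, u n x
  have hSl : ∀ x ∈ ball (0 : E) r, ∀ y ∈ ball (0 : E) r, ‖S x - S y‖ ≤ 4 / 7 * ‖x - y‖ := by
    intro x hx y hy
    simp only [S]
    rw [← (hus x hx).tsum_sub (hus y hy)]
    exact tsum_of_norm_bounded (hgs.mul_right ‖x - y‖) fun n => hul n x hx y hy
  have hderivb : ∀ (v : E → E) (c : ℝ), 0 ≤ c → (∀ x ∈ ball (0 : E) r, ∀ y ∈ ball (0 : E) r,
      ‖v x - v y‖ ≤ c * ‖x - y‖) → ∀ x ∈ ball (0 : E) r, ‖fderiv ℂ v x‖ ≤ c := by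
    intro v c hc0 hv x hx
    refine norm_fderiv_le_of_lip' ℂ hc0 ?_
    filter_upwards [isOpen_ball.mem_nhds hx] with y hy using hv y hy x hx
  have hSd : ∀ x ∈ ball (0 : E) r, DifferentiableAt ℂ S x := fun x hx =>
    (hasFDerivAt_tsum_of_isPreconnected hgs.summable isOpen_ball
      (convex_ball (0 : E) r).isPreconnected
      (fun n x _ => (hud n x).hasFDerivAt)
      (fun n x hx => hderivb (u n) _ (by positivity) (hul n) x hx) (mem_ball_self hr)
      (hus 0 (mem_ball_self hr)) hx).differentiableAt
  let f : E → E := fun x => x + S x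
  have happ : ApproximatesLinearOn f ((ContinuousLinearEquiv.refl ℂ E : E ≃L[ℂ] E) : E →L[ℂ] E)
      (ball 0 r) (4 / 7) := by
    intro x hx y hy
    have : f x - f y - ((ContinuousLinearEquiv.refl ℂ E : E ≃L[ℂ] E) : E →L[ℂ] E) (x - y)
        = S x - S y := by
      simp only [f, ContinuousLinearEquiv.coe_refl, ContinuousLinearMap.coe_id', id]; abel
    rw [this]
    simpa using hSl x hx y hy
  have hcond : Subsingleton E ∨ (4 / 7 : NNReal) <
      ‖((ContinuousLinearEquiv.refl ℂ E).symm : E →L[ℂ] E)‖₊⁻¹ := by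
    rcases subsingleton_or_nontrivial E with h | h
    · exact Or.inl h
    · right
      have : ‖((ContinuousLinearEquiv.refl ℂ E).symm : E →L[ℂ] E)‖₊ = 1 := by
        simp
      rw [this, inv_one]
      rw [← NNReal.coe_lt_coe]; norm_num
  refine ⟨happ.toOpenPartialHomeomorph f _ hcond isOpen_ball, rfl, ?_, ?_, ?_⟩
  · simp [f, S, hu0]
  · intro x hx
    have h1 : S x = u 0 x + ∑' n, u (n + 1) x := (hus x hx).tsum_eq_zero_add
    have h2 : ∀ n, u (n + 1) x = (4 : ℂ) • u n (G x) := fun n => by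
      simp only [u, Function.iterate_succ_apply, pow_succ', mul_smul]
    have hGx : G x ∈ ball (0 : E) r := iterate_mem_ball h0 hc 1 hx
    have h3 : S x = (4 : ℂ) • G x - x + (4 : ℂ) • S (G x) := by
      rw [h1]
      simp only [h2, S]
      rw [(hus _ hGx).tsum_const_smul]
      simp [u]
    change G x + S (G x) = (4 : ℂ)⁻¹ • (x + S x)
    rw [h3]
    have : x + ((4 : ℂ) • G x - x + (4 : ℂ) • S (G x)) = (4 : ℂ) • (G x + S (G x)) := by
      rw [smul_add]; abel
    rw [this, inv_smul_smul₀ (by norm_num)]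
  · intro y hy
    set φ := happ.toOpenPartialHomeomorph f _ hcond isOpen_ball with hφ
    have hx : φ.symm y ∈ ball (0 : E) r := φ.map_target hy
    have hT : ‖-fderiv ℂ S (φ.symm y)‖ < 1 := by
      rw [norm_neg]
      exact (hderivb S _ (by norm_num) hSl _ hx).trans_lt (by norm_num)
    -- the derivative of `φ` is `id + T` with `‖T‖ < 1`, hence invertible
    have hf : HasFDerivAt φ ((ContinuousLinearEquiv.ofUnit (Units.oneSub _ hT) : E ≃L[ℂ] E) :
        E →L[ℂ] E) (φ.symm y) := by
      have := (hasFDerivAt_id (𝕜 := ℂ) (φ.symm y)).add (hSd _ hx).hasFDerivAt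
      convert! this using 1
      ext v
      simp [ContinuousLinearEquiv.ofUnit]
    exact (φ.hasFDerivAt_symm hy hf).differentiableAt.differentiableWithinAt

end Linearization

/-! ### Basins of attraction -/

section Global

variable {E : Type*} [NormedAddCommGroup E] [NormedSpace ℂ E]

/-- The derivative of `4G - id` vanishes at the origin and is Lipschitz, so `4G - id` has Lipschitz
constant `O(ρ)` on the ball of radius `ρ`. -/
lemma exists_defect_bound {G : E → E} (hG : ContDiff ℂ 2 G)
    (hd : HasFDerivAt G ((4 : ℂ)⁻¹ • ContinuousLinearMap.id ℂ E) 0) :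
    ∃ K r : ℝ, 0 ≤ K ∧ 0 < r ∧ r ≤ 1 ∧ K * r ≤ 1 / 4 ∧
      ∀ ρ ≤ r, ∀ x ∈ closedBall (0 : E) ρ ∩ ball 0 r, ∀ y ∈ closedBall (0 : E) ρ ∩ ball 0 r,
      ‖((4 : ℂ) • G x - x) - ((4 : ℂ) • G y - y)‖ ≤ K * ρ * ‖x - y‖ := by
  let e : E → E := fun x => (4 : ℂ) • G x - x
  have he : ContDiff ℂ 2 e := (hG.const_smul _).sub contDiff_id
  have he0 : fderiv ℂ e 0 = 0 := by
    have h := ((hd.const_smul (4 : ℂ)).sub (hasFDerivAt_id (𝕜 := ℂ) (0 : E))).fderiv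
    rw [smul_inv_smul₀ (by norm_num), sub_self] at h
    exact h
  have hf1 : ContDiff ℂ 1 (fderiv ℂ e) := he.fderiv_right (by norm_num)
  obtain ⟨K, t, ht, hKt⟩ := hf1.contDiffAt.exists_lipschitzOnWith (x := 0)
  obtain ⟨r₀, hr₀, hr₀t⟩ := Metric.mem_nhds_iff.1 ht
  refine ⟨K, min (min r₀ 1) (1 / (4 * (K + 1))), K.2, by positivity,
    (min_le_left _ _).trans (min_le_right _ _), ?_, ?_⟩
  · have h1 : min (min r₀ 1) (1 / (4 * ((K : ℝ) + 1))) ≤ 1 / (4 * (K + 1)) := min_le_right _ _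
    have hK : (0 : ℝ) ≤ K := K.2
    calc (K : ℝ) * min (min r₀ 1) (1 / (4 * (K + 1))) ≤ K * (1 / (4 * (K + 1))) := by gcongr
      _ ≤ 1 / 4 := by
        rw [mul_one_div, div_le_div_iff₀ (by positivity) (by norm_num)]
        linarith
  · intro ρ hρ x hx y hy
    have hconv : Convex ℝ (closedBall (0 : E) ρ ∩
        ball 0 (min (min r₀ 1) (1 / (4 * ((K : ℝ) + 1))))) :=
      (convex_closedBall _ _).inter (convex_ball _ _)
    refine hconv.norm_image_sub_le_of_norm_fderiv_le (𝕜 := ℂ) (f := e)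
      (fun z _ => (he.differentiable (by norm_num)).differentiableAt) ?_ hy hx
    intro z hz
    have hzt : z ∈ t := hr₀t (ball_subset_ball ((min_le_left _ _).trans (min_le_left _ _)) hz.2)
    have := hKt.dist_le_mul z hzt 0 (mem_of_mem_nhds ht)
    rw [he0, dist_zero_right, dist_zero_right] at this
    refine this.trans ?_
    have := mem_closedBall_zero_iff.1 hz.1
    gcongr

/-- The points whose orbit under `G` enters the ball of radius `r` about the origin. When `G`
contracts that ball towards the origin, this is the basin of attraction of the origin. -/
def basin (G : E → E) (r : ℝ) : Set E := {z | ∃ n : ℕ, G^[n] z ∈ ball (0 : E) r}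

/-- The basin is a biholomorphic image of the whole space: extend the inverse of the linearization
by `θ x = G⁻ⁿ (φ⁻¹ (4⁻ⁿ x))`, which does not depend on the choice of a large `n`. -/
lemma exists_parametrization (G : E ≃ E) (hGi : Differentiable ℂ G.symm)
    {r : ℝ} (hr : 0 < r) (hmaps : ∀ x ∈ ball (0 : E) r, G x ∈ ball (0 : E) r)
    (φ : OpenPartialHomeomorph E E) (hs : φ.source = ball 0 r) (hφ0 : φ 0 = 0)
    (hφ : ∀ x ∈ ball 0 r, φ (G x) = (4 : ℂ)⁻¹ • φ x) (hψ : DifferentiableOn ℂ φ.symm φ.target) :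
    ∃ θ : E → E, Function.Injective θ ∧ Differentiable ℂ θ ∧ range θ = basin G r := by
  have hT0 : (0 : E) ∈ φ.target := by
    rw [← hφ0]; exact φ.map_source (by rw [hs]; exact mem_ball_self hr)
  have hsrc : ∀ y ∈ φ.target, φ.symm y ∈ ball (0 : E) r := fun y hy => by
    rw [← hs]; exact φ.map_target hy
  -- the functional equation of the local inverse
  have hstep : ∀ y ∈ φ.target, (4 : ℂ)⁻¹ • y ∈ φ.target ∧
      φ.symm ((4 : ℂ)⁻¹ • y) = G (φ.symm y) := by
    intro y hy
    have hx := hsrc y hy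
    have hGx : G (φ.symm y) ∈ φ.source := by rw [hs]; exact hmaps _ hx
    have h1 := hφ _ hx
    rw [φ.right_inv hy] at h1
    rw [← h1]
    exact ⟨φ.map_source hGx, φ.left_inv hGx⟩
  have hsteps : ∀ (m : ℕ), ∀ y ∈ φ.target, ((4 : ℂ)⁻¹ ^ m) • y ∈ φ.target ∧
      φ.symm (((4 : ℂ)⁻¹ ^ m) • y) = G^[m] (φ.symm y) := by
    intro m
    induction m with
    | zero => intro y hy; simpa using hy
    | succ m ih =>
      intro y hy
      have h1 := ih y hy
      have h2 := hstep _ h1.1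
      rw [pow_succ', mul_smul, Function.iterate_succ_apply', ← h1.2]
      exact h2
  have hex : ∀ x : E, ∃ n : ℕ, ((4 : ℂ)⁻¹ ^ n) • x ∈ φ.target := by
    intro x
    have h1 : Tendsto (fun n : ℕ => ((4 : ℂ)⁻¹ ^ n) • x) atTop (𝓝 0) := by
      have := (tendsto_pow_atTop_nhds_zero_of_norm_lt_one (x := (4 : ℂ)⁻¹) (by norm_num)).smul_const x
      simpa using this
    exact (h1.eventually (φ.open_target.mem_nhds hT0)).exists
  have hinv : ∀ n, Function.LeftInverse G.symm^[n] G^[n] := fun n => G.left_inv.iterate n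
  have hinv' : ∀ n, Function.LeftInverse G^[n] G.symm^[n] := fun n =>
    Function.LeftInverse.iterate G.right_inv n
  choose N hN using hex
  let θ : E → E := fun x => G.symm^[N x] (φ.symm (((4 : ℂ)⁻¹ ^ N x) • x))
  -- enlarging the number of steps does not change the value
  have haux : ∀ x (n m : ℕ), ((4 : ℂ)⁻¹ ^ n) • x ∈ φ.target →
      G.symm^[m + n] (φ.symm (((4 : ℂ)⁻¹ ^ (m + n)) • x))
        = G.symm^[n] (φ.symm (((4 : ℂ)⁻¹ ^ n) • x)) := by
    intro x n m h
    rw [pow_add, mul_smul, (hsteps m _ h).2, add_comm m n, Function.iterate_add_apply, hinv m]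
  have hθ : ∀ x n, ((4 : ℂ)⁻¹ ^ n) • x ∈ φ.target →
      θ x = G.symm^[n] (φ.symm (((4 : ℂ)⁻¹ ^ n) • x)) := by
    intro x n h
    change G.symm^[N x] (φ.symm (((4 : ℂ)⁻¹ ^ N x) • x)) = _
    rw [← haux x n (N x) h, add_comm, haux x (N x) n (hN x)]
  refine ⟨θ, ?_, ?_, ?_⟩
  · intro x y hxy
    have hx : ((4 : ℂ)⁻¹ ^ (N y + N x)) • x ∈ φ.target := by
      rw [pow_add, mul_smul]; exact (hsteps _ _ (hN x)).1
    have hy : ((4 : ℂ)⁻¹ ^ (N y + N x)) • y ∈ φ.target := by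
      rw [add_comm, pow_add, mul_smul]; exact (hsteps _ _ (hN y)).1
    rw [hθ x _ hx, hθ y _ hy] at hxy
    have h1 := φ.symm.injOn hx hy ((G.symm.injective.iterate _) hxy)
    exact smul_right_injective E (pow_ne_zero _ (by norm_num)) h1
  · intro x
    have hcont : Continuous fun x' : E => ((4 : ℂ)⁻¹ ^ N x) • x' := continuous_const_smul _
    have hev : θ =ᶠ[𝓝 x] fun x' => G.symm^[N x] (φ.symm (((4 : ℂ)⁻¹ ^ N x) • x')) := by
      filter_upwards [(φ.open_target.preimage hcont).mem_nhds (hN x)] with x' hx'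
      exact hθ x' _ hx'
    refine DifferentiableAt.congr_of_eventuallyEq ?_ hev
    have h1 : DifferentiableAt ℂ φ.symm (((4 : ℂ)⁻¹ ^ N x) • x) :=
      hψ.differentiableAt (φ.open_target.mem_nhds (hN x))
    have h2 : DifferentiableAt ℂ (fun x' : E => ((4 : ℂ)⁻¹ ^ N x) • x') x :=
      differentiableAt_id.const_smul _
    exact ((hGi.iterate _).differentiableAt).comp x (h1.comp x h2)
  · ext z
    constructor
    · rintro ⟨x, rfl⟩
      refine ⟨N x, ?_⟩
      rw [hθ x _ (hN x), hinv']
      exact hsrc _ (hN x)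
    · rintro ⟨n, hn⟩
      have hn' : G^[n] z ∈ φ.source := by rwa [hs]
      refine ⟨((4 : ℂ) ^ n) • φ (G^[n] z), ?_⟩
      have h1 : ((4 : ℂ)⁻¹ ^ n) • ((4 : ℂ) ^ n) • φ (G^[n] z) = φ (G^[n] z) := by
        rw [inv_pow, inv_smul_smul₀ (pow_ne_zero _ (by norm_num))]
      rw [hθ _ n (by rw [h1]; exact φ.map_source hn'), h1, φ.left_inv hn', hinv]

end Global

lemma differentiable_eval (p : MvPolynomial (Fin 2) ℂ) :
    Differentiable ℂ fun z : E2 => MvPolynomial.eval (fun i => z i) p := by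
  induction p using MvPolynomial.induction_on with
  | C a => simp
  | add p q hp hq => simp only [map_add]; exact hp.add hq
  | mul_X p i hp =>
    simp only [map_mul, MvPolynomial.eval_X]
    exact hp.mul (differentiable_euclidean.1 differentiable_id i)

lemma isOpen_basin {G : E2 → E2} (hG : Continuous G) (r : ℝ) : IsOpen (basin G r) := by
  have : basin G r = ⋃ n : ℕ, G^[n] ⁻¹' ball 0 r := by
    ext z; simp [basin]
  rw [this]
  exact isOpen_iUnion fun n => isOpen_ball.preimage (hG.iterate n)

/-- Convergence to the origin is uniform on compact subsets of the basin. -/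
lemma exists_iterate_small {G : E2 → E2} (hG : Continuous G) (h0 : G 0 = 0) {r s : ℝ} (hs : 0 < s)
    (hsr : s ≤ r)
    (hc : ∀ x ∈ ball (0 : E2) r, ∀ y ∈ ball (0 : E2) r, ‖G x - G y‖ ≤ 3 / 8 * ‖x - y‖)
    {K : Set E2} (hK : IsCompact K) (hKb : K ⊆ basin G r) :
    ∃ n : ℕ, ∀ z ∈ K, G^[n] z ∈ ball (0 : E2) s := by
  have hmono : Monotone fun n : ℕ => G^[n] ⁻¹' ball (0 : E2) s := by
    refine monotone_nat_of_le_succ fun n z hz => ?_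
    rw [mem_preimage] at hz ⊢
    have h1 := norm_iterate_le h0 hc 1 (ball_subset_ball hsr hz)
    rw [Function.iterate_succ_apply']
    rw [mem_ball_zero_iff] at hz ⊢
    simp only [Function.iterate_one, pow_one] at h1
    linarith [norm_nonneg (G^[n] z)]
  suffices hcov : K ⊆ ⋃ n : ℕ, G^[n] ⁻¹' ball (0 : E2) s by
    obtain ⟨n, hn⟩ := hK.elim_directed_cover (fun n : ℕ => G^[n] ⁻¹' ball (0 : E2) s)
      (fun n => isOpen_ball.preimage (hG.iterate n)) hcov hmono.directed_le
    exact ⟨n, fun z hz => hn hz⟩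
  intro z hz
  obtain ⟨n, hn⟩ := hKb hz
  have ht : Tendsto (fun m : ℕ => (3 / 8 : ℝ) ^ m * ‖G^[n] z‖) atTop (𝓝 0) := by
    simpa using (tendsto_pow_atTop_nhds_zero_of_lt_one (r := (3 / 8 : ℝ)) (by norm_num)
      (by norm_num)).mul_const ‖G^[n] z‖
  obtain ⟨m, hm⟩ := (ht.eventually (gt_mem_nhds hs)).exists
  rw [mem_iUnion]
  refine ⟨m + n, ?_⟩
  rw [mem_preimage, Function.iterate_add_apply, mem_ball_zero_iff]
  exact (norm_iterate_le h0 hc m hn).trans_lt hm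

/-- Translates of the basin are Runge: if `Gⁿ` maps `K` into a small ball, then `f ∘ G⁻ⁿ` is close
to a polynomial `p` there, and the entire function `p ∘ Gⁿ` is close to a polynomial on `K`. -/
lemma isRunge2_basin (G : E2 ≃ E2) (hG : Differentiable ℂ G) (hGi : Differentiable ℂ G.symm)
    (h0 : G 0 = 0) {r : ℝ} (hr : 0 < r)
    (hc : ∀ x ∈ ball (0 : E2) r, ∀ y ∈ ball (0 : E2) r, ‖G x - G y‖ ≤ 3 / 8 * ‖x - y‖) (e : E2) :
    IsRunge2 ((fun z => z - e) ⁻¹' basin G r) := by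
  refine ⟨(isOpen_basin hG.continuous r).preimage (by fun_prop), ?_⟩
  intro f hf K hK hKb ε hε
  obtain ⟨n, hn⟩ := exists_iterate_small hG.continuous h0 (s := r / 4) (by positivity)
    (by linarith) hc (hK.image (f := fun z => z - e) (by fun_prop)) (by
      rintro _ ⟨z, hz, rfl⟩; exact hKb hz)
  have hinv : ∀ n, Function.LeftInverse G.symm^[n] G^[n] := fun n => G.left_inv.iterate n
  have hinv' : ∀ n, Function.LeftInverse G^[n] G.symm^[n] := fun n =>
    Function.LeftInverse.iterate G.right_inv n
  have hcoord : ∀ (z : E2) i, ‖z i‖ ≤ ‖z‖ := fun z i => PiLp.norm_apply_le z i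
  have hdG : Differentiable ℂ fun z : E2 => G^[n] (z - e) :=
    (hG.iterate n).comp (differentiable_id.sub_const e)
  obtain ⟨p, hp⟩ := poly_approx (f := fun y => f (G.symm^[n] y + e)) (r := r / 4) (R := r / 2)
    (K := (fun z => G^[n] (z - e)) '' K) (ε := ε / 2) (by positivity) (by linarith) (by
      refine hf.comp (t := (fun z => z - e) ⁻¹' basin G r) (f := fun y => G.symm^[n] y + e)
        (((hGi.iterate n).add_const e).differentiableOn) ?_
      intro y hy
      refine ⟨n, ?_⟩
      change G^[n] (G.symm^[n] y + e - e) ∈ ball 0 r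
      rw [add_sub_cancel_right, hinv', mem_ball_zero_iff, EuclideanSpace.norm_eq,
        Fin.sum_univ_two, Real.sqrt_lt' hr]
      nlinarith [hy.1, hy.2, norm_nonneg (y 0), norm_nonneg (y 1)])
    (hK.image hdG.continuous)
    (by
      rintro _ ⟨z, hz, rfl⟩
      have := mem_ball_zero_iff.1 (hn _ ⟨z, hz, rfl⟩)
      exact ⟨(hcoord _ _).trans this.le, (hcoord _ _).trans this.le⟩) (half_pos hε)
  obtain ⟨M, hM⟩ := hK.isBounded.exists_norm_le
  obtain ⟨q, hq⟩ := poly_approx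
    (f := fun z => MvPolynomial.eval (fun i => (G^[n] (z - e)) i) p) (r := |M| + 1)
    (R := |M| + 2) (K := K) (ε := ε / 2) (by positivity) (by linarith)
    ((differentiable_eval p).comp hdG).differentiableOn hK
    (fun z hz => by
      have := (hM z hz).trans (le_abs_self M)
      exact ⟨by linarith [hcoord z 0], by linarith [hcoord z 1]⟩) (half_pos hε)
  refine ⟨q, fun z hz => ?_⟩
  have h1 := hp _ ⟨z, hz, rfl⟩
  have h2 := hq z hz
  simp only [hinv n (z - e), sub_add_cancel] at h1
  calc _ ≤ _ := norm_sub_le_norm_sub_add_norm_sub _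
        (MvPolynomial.eval (fun i => (G^[n] (z - e)) i) p) _
    _ < ε := by linarith

/-! ### An automorphism preserving a line -/

section Automorphism

/-- The automorphism `(a, b) ↦ ((1 + a) e^w - 1, w)`, `w = -(3a + b)/4`, of `ℂ²`. It fixes the
origin and maps the line `a = -1` to itself; in the coordinate `1 + a` it is the
composition of an affine map with the exponential shear `(a, w) ↦ (a e^w, w)`. -/
def henonLike : E2 ≃ E2 where
  toFun z := !₂[(1 + z 0) * Complex.exp (-(3 * z 0 + z 1) / 4) - 1, -(3 * z 0 + z 1) / 4]
  invFun z := !₂[(1 + z 0) * Complex.exp (-z 1) - 1,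
    -4 * z 1 - 3 * ((1 + z 0) * Complex.exp (-z 1) - 1)]
  left_inv z := by
    have h : Complex.exp (-(3 * z 0 + z 1) / 4) * Complex.exp (-(-(3 * z 0 + z 1) / 4)) = 1 := by
      rw [← Complex.exp_add, add_neg_cancel, Complex.exp_zero]
    ext i
    fin_cases i
    · simp only [Fin.zero_eta, Matrix.cons_val_zero, Matrix.cons_val_one]
      linear_combination (1 + z 0) * h
    · simp only [Fin.mk_one, Matrix.cons_val_zero, Matrix.cons_val_one]
      linear_combination -3 * (1 + z 0) * h
  right_inv z := by
    have h : Complex.exp (-z 1) * Complex.exp (z 1) = 1 := by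
      rw [← Complex.exp_add, neg_add_cancel, Complex.exp_zero]
    have h2 : ∀ a : ℂ, -(3 * a + (-4 * z 1 - 3 * a)) / 4 = z 1 := fun a => by ring
    ext i
    fin_cases i
    · simp only [Fin.zero_eta, Matrix.cons_val_zero, Matrix.cons_val_one, h2]
      linear_combination (1 + z 0) * h
    · simp only [Fin.mk_one, Matrix.cons_val_zero, Matrix.cons_val_one, h2]

lemma henonLike_zero (z : E2) :
    henonLike z 0 = (1 + z 0) * Complex.exp (-(3 * z 0 + z 1) / 4) - 1 := rfl

lemma henonLike_one (z : E2) : henonLike z 1 = -(3 * z 0 + z 1) / 4 := rfl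

lemma henonLike_origin : henonLike 0 = 0 := by
  ext i
  fin_cases i <;> simp [henonLike]

lemma contDiff_henonLike : ContDiff ℂ 2 henonLike := by
  rw [contDiff_euclidean]
  intro i
  fin_cases i
  · simp only [Fin.zero_eta, henonLike_zero]
    fun_prop
  · simp only [Fin.mk_one, henonLike_one]
    fun_prop

lemma differentiable_henonLike_symm : Differentiable ℂ henonLike.symm := by
  rw [differentiable_euclidean]
  intro i
  fin_cases i
  · change Differentiable ℂ fun z : E2 => (1 + z 0) * Complex.exp (-z 1) - 1
    fun_prop
  · change Differentiable ℂ fun z : E2 => -4 * z 1 - 3 * ((1 + z 0) * Complex.exp (-z 1) - 1)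
    fun_prop

lemma fderiv_henonLike (v : E2) : fderiv ℂ henonLike 0 v =
    !₂[(v 0 - v 1) / 4, -(3 * v 0 + v 1) / 4] := by
  have hd : HasFDerivAt henonLike (fderiv ℂ henonLike 0) 0 :=
    ((contDiff_henonLike.differentiable (by norm_num)) 0).hasFDerivAt
  have hp : ∀ i : Fin 2, HasFDerivAt (fun z : E2 => z i) (EuclideanSpace.proj i : E2 →L[ℂ] ℂ) 0 :=
    fun i => (EuclideanSpace.proj i : E2 →L[ℂ] ℂ).hasFDerivAt
  have hw : HasFDerivAt (fun z : E2 => -(3 * z 0 + z 1) / 4) _ 0 :=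
    ((((hp 0).const_mul 3).add (hp 1)).neg).mul_const (4 : ℂ)⁻¹
  have hz := ((((hp 0).const_add 1).mul hw.cexp).sub_const 1)
  ext i
  fin_cases i
  · have := DFunLike.congr_fun (((EuclideanSpace.proj 0 : E2 →L[ℂ] ℂ).hasFDerivAt.comp 0 hd).unique hz) v
    simp at this
    simp
    rw [this]
    ring
  · have := DFunLike.congr_fun (((EuclideanSpace.proj 1 : E2 →L[ℂ] ℂ).hasFDerivAt.comp 0 hd).unique hw) v
    simp at this
    simp
    rw [this]
    ring

/-- The derivative of `henonLike` at the origin has trace `0` and determinant `-1/4`, so its square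
is `1/4`. -/
lemma hasFDerivAt_henonLike_sq :
    HasFDerivAt (henonLike.trans henonLike) ((4 : ℂ)⁻¹ • ContinuousLinearMap.id ℂ E2) 0 := by
  have hd : HasFDerivAt henonLike (fderiv ℂ henonLike 0) 0 :=
    ((contDiff_henonLike.differentiable (by norm_num)) 0).hasFDerivAt
  have hd' : HasFDerivAt henonLike (fderiv ℂ henonLike 0) (henonLike 0) := by
    rwa [henonLike_origin]
  convert! hd'.comp 0 hd using 1
  ext v i
  fin_cases i
  · simp [fderiv_henonLike]; ring
  · simp [fderiv_henonLike]; ring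

end Automorphism

/-- There is a Fatou–Bieberbach map `θ : ℂ² → ℂ²` (injective and holomorphic, hence a
biholomorphism onto a proper subdomain) whose image lies in ℂ*×ℂ and is Runge in ℂ². -/
theorem stmt6 :
    ∃ θ : E2 → E2,
      Function.Injective θ ∧ Differentiable ℂ θ ∧
      range θ ⊆ OmegaStar ∧ IsRunge2 (range θ) := by
  let G : E2 ≃ E2 := henonLike.trans henonLike
  have hG : ContDiff ℂ 2 G := contDiff_henonLike.comp contDiff_henonLike
  have hGd : Differentiable ℂ G := hG.differentiable (by norm_num)
  have hGi : Differentiable ℂ G.symm :=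
    differentiable_henonLike_symm.comp differentiable_henonLike_symm
  have h0 : G 0 = 0 := by simp [G, henonLike_origin]
  obtain ⟨K, r, hK, hr, hr1, hKr, hL⟩ := exists_defect_bound hG hasFDerivAt_henonLike_sq
  have hc := contraction_of_defect hKr hL
  obtain ⟨φ, hs, hφ0, hφ, hψ⟩ := exists_linearization hGd h0 hK hr hKr hL
  obtain ⟨θ, hinj, hdiff, hrange⟩ := exists_parametrization G hGi hr
    (fun x hx => iterate_mem_ball h0 hc 1 hx) φ hs hφ0 hφ hψ
  let e : E2 := !₂[1, 0]
  have hr' : range (fun x => θ x + e) = (fun z => z - e) ⁻¹' basin G r := by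
    rw [← hrange]
    ext z
    simp [eq_sub_iff_add_eq]
  refine ⟨fun x => θ x + e, fun x y h => hinj (add_right_cancel h), hdiff.add_const e, ?_, ?_⟩
  · rw [hr']
    rintro z ⟨n, hn⟩ hz
    -- the line `w 0 = -1` is invariant and stays at distance `1 ≥ r` from the origin
    have hF : ∀ w : E2, w 0 = -1 → henonLike w 0 = -1 := fun w hw => by
      rw [henonLike_zero, hw]; ring
    have hit : ∀ m, (G^[m] (z - e)) 0 = -1 := by
      intro m
      induction m with
      | zero => simp [hz, e]
      | succ m ih => rw [Function.iterate_succ_apply']; exact hF _ (hF _ ih)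
    have h1 := PiLp.norm_apply_le (G^[n] (z - e)) 0
    rw [hit n, norm_neg, norm_one] at h1
    linarith [mem_ball_zero_iff.1 hn]
  · rw [hr']
    exact isRunge2_basin G hGd hGi h0 hr hc e
end
end

section
/- Let φᵏ : ℂ → ℂ (k ∈ ℕ) be injective holomorphic maps. Then there exist injective holomorphic maps σᵏ : ℂ → ℂ such that σᵏ = σᵏ⁺¹ ∘ φᵏ for every k and ⋃_k σᵏ(ℂ) = ℂ. (In other words, every long ℂ — the direct limit of a sequence of injective holomorphic self-maps of ℂ — is biholomorphic to ℂ.) -/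
/-!
An injective entire function `f` is affine. Choose `c` with `f' c ≠ 0`. Since `f` is open and
injective, the points outside the unit disc around `c` are mapped at a distance bounded below from
`f c`, so `h z = (z - c) / (f z - f c)`, which extends to a nowhere vanishing entire function, has
at most linear growth. By Liouville's theorem `h` is affine, and having no zero it is constant;
this makes `f` affine (`exists_affine_of_injective`).

The maps `φᵏ` are thus affine bijections, and one may take `σ⁰ = id` and
`σᵏ⁺¹ = σᵏ ∘ (φᵏ)⁻¹`. Already the image of `σ⁰` is all of `ℂ`.
-/

open Set

noncomputable section

lemma differentiable_dslope {f : ℂ → ℂ} (hf : Differentiable ℂ f) (c : ℂ) :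
    Differentiable ℂ (dslope f c) :=
  differentiableOn_univ.1
    ((Complex.differentiableOn_dslope Filter.univ_mem).2 hf.differentiableOn)

lemma exists_deriv_ne_zero_of_injective {f : ℂ → ℂ} (hf : Differentiable ℂ f)
    (hinj : Function.Injective f) : ∃ c, deriv f c ≠ 0 := by
  by_contra! H
  exact zero_ne_one (hinj (is_const_of_deriv_eq_zero hf H 0 1))

lemma exists_pos_le_norm_sub_of_injective {f : ℂ → ℂ} (hf : Differentiable ℂ f)
    (hinj : Function.Injective f) (c : ℂ) :
    ∃ r > 0, ∀ z, 1 ≤ ‖z - c‖ → r ≤ ‖f z - f c‖ := by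
  have ho : IsOpenMap f := by
    have ha : AnalyticOnNhd ℂ f univ := fun z _ => hf.analyticAt z
    rcases ha.is_constant_or_isOpenMap with ⟨w, hw⟩ | h
    · exact absurd (hinj ((hw 0).trans (hw 1).symm)) zero_ne_one
    · exact h
  obtain ⟨r, hr, hsub⟩ := Metric.isOpen_iff.1 (ho _ (Metric.isOpen_ball (x := c) (ε := 1))) (f c)
    ⟨c, Metric.mem_ball_self one_pos, rfl⟩
  refine ⟨r, hr, fun z hz => ?_⟩
  by_contra! hlt
  obtain ⟨w, hw, hwz⟩ := hsub (mem_ball_iff_norm.2 hlt)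
  rw [hinj hwz, mem_ball_iff_norm] at hw
  exact absurd hw (not_lt.2 hz)

/-- Liouville's theorem for functions of at most linear growth. -/
lemma exists_affine_of_linear_growth {h : ℂ → ℂ} (hh : Differentiable ℂ h) {c : ℂ} {M : ℝ}
    (hM : ∀ z, 1 ≤ ‖z - c‖ → ‖h z‖ ≤ M * ‖z - c‖) :
    ∃ b, ∀ z, h z = h c + (z - c) * b := by
  have hd := differentiable_dslope hh c
  obtain ⟨C, hC⟩ := (isCompact_closedBall c 1).exists_bound_of_continuousOn
    hd.continuous.continuousOn
  obtain ⟨b, hb⟩ := hd.exists_const_forall_eq_of_bounded (by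
    refine isBounded_iff_forall_norm_le.2 ⟨max C (M + ‖h c‖), ?_⟩
    rintro _ ⟨z, rfl⟩
    rcases le_total ‖z - c‖ 1 with hz | hz
    · exact (hC z (mem_closedBall_iff_norm.2 hz)).trans (le_max_left _ _)
    · refine le_trans ?_ (le_max_right _ _)
      have hp : 0 < ‖z - c‖ := one_pos.trans_le hz
      have e : (z - c) * dslope h c z = h z - h c := sub_smul_dslope h c z
      have e' : ‖z - c‖ * ‖dslope h c z‖ = ‖h z - h c‖ := by rw [← norm_mul, e]
      have h1 := norm_sub_le (h z) (h c)
      have h2 := hM z hz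
      refine le_of_mul_le_mul_left ?_ hp
      nlinarith [norm_nonneg (h c)])
  refine ⟨b, fun z => ?_⟩
  have e : (z - c) * dslope h c z = h z - h c := sub_smul_dslope h c z
  rw [hb] at e
  rw [e]; ring

theorem exists_affine_of_injective {f : ℂ → ℂ} (hf : Differentiable ℂ f)
    (hinj : Function.Injective f) : ∃ a b : ℂ, a ≠ 0 ∧ ∀ z, f z = a * z + b := by
  obtain ⟨c, hc⟩ := exists_deriv_ne_zero_of_injective hf hinj
  obtain ⟨r, hr, hrf⟩ := exists_pos_le_norm_sub_of_injective hf hinj c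
  have e : ∀ z, (z - c) * dslope f c z = f z - f c := sub_smul_dslope f c
  have hne : ∀ z, dslope f c z ≠ 0 := by
    intro z hz
    rcases eq_or_ne z c with rfl | hzc
    · exact hc (by rwa [dslope_same] at hz)
    · have := e z
      rw [hz, mul_zero] at this
      exact hzc (hinj (sub_eq_zero.1 this.symm))
  have hh : Differentiable ℂ fun z => (dslope f c z)⁻¹ := (differentiable_dslope hf c).inv hne
  obtain ⟨b, hb⟩ := exists_affine_of_linear_growth hh (c := c) (M := r⁻¹) (by
    intro z hz
    have hg : 0 < ‖dslope f c z‖ := norm_pos_iff.2 (hne z)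
    have e' : ‖z - c‖ * ‖dslope f c z‖ = ‖f z - f c‖ := by rw [← norm_mul, e]
    have h1 := hrf z hz
    rw [norm_inv, inv_mul_eq_div, inv_eq_one_div, div_le_div_iff₀ hg hr]
    linarith)
  -- A nonzero slope would give the nowhere vanishing function `(dslope f c)⁻¹` a zero.
  have hb0 : b = 0 := by
    by_contra hb0
    have := hb (c - (dslope f c c)⁻¹ / b)
    refine inv_ne_zero (hne (c - (dslope f c c)⁻¹ / b)) (this.trans ?_)
    field_simp
    ring
  have hconst : ∀ z, dslope f c z = dslope f c c := fun z => by
    simpa [hb0] using hb z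
  refine ⟨dslope f c c, f c - dslope f c c * c, hne c, fun z => ?_⟩
  have := e z
  rw [hconst z] at this
  linear_combination -this

/-- Every long ℂ is biholomorphic to ℂ: given injective holomorphic maps
`φᵏ : ℂ → ℂ`, there are injective holomorphic maps `σᵏ : ℂ → ℂ` with
`σᵏ = σᵏ⁺¹ ∘ φᵏ` whose images exhaust ℂ, so the direct limit of the sequence
`(φᵏ)` is biholomorphic to ℂ. -/
theorem stmt12 (φ : ℕ → ℂ → ℂ)
    (hinj : ∀ k, Function.Injective (φ k))
    (hholo : ∀ k, Differentiable ℂ (φ k)) :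
    ∃ σ : ℕ → ℂ → ℂ,
      (∀ k, Function.Injective (σ k)) ∧
      (∀ k, Differentiable ℂ (σ k)) ∧
      (∀ k, σ k = σ (k + 1) ∘ φ k) ∧
      (⋃ k, range (σ k)) = univ := by
  choose a b ha hab using fun k => exists_affine_of_injective (hholo k) (hinj k)
  let σ : ℕ → ℂ → ℂ := fun k => Nat.rec id (fun k s => s ∘ fun w => (w - b k) / a k) k
  have hσ : ∀ k, σ (k + 1) = σ k ∘ fun w => (w - b k) / a k := fun _ => rfl
  refine ⟨σ, fun k => ?_, fun k => ?_, fun k => ?_, ?_⟩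
  · induction k with
    | zero => exact Function.injective_id
    | succ k ih =>
      rw [hσ]
      refine ih.comp fun x y hxy => ?_
      exact sub_left_injective ((div_left_inj' (ha k)).1 hxy)
  · induction k with
    | zero => exact differentiable_id
    | succ k ih =>
      rw [hσ]
      exact ih.comp ((differentiable_id.sub_const _).div_const _)
  · funext z
    have : (φ k z - b k) / a k = z := by
      rw [hab, add_sub_cancel_right, mul_div_cancel_left₀ _ (ha k)]
    simp only [hσ, Function.comp_apply, this]
  · exact eq_univ_of_forall fun z => mem_iUnion.2 ⟨0, z, rfl⟩
end
end

section
/- Let Ω ⊆ ℂᵐ be open, let F : Ω → ℂᵐ be an injective holomorphic map, let U be an open set whose closure is compact and contained in Ω, and let Y be a compact set with Y ⊆ F(U). Then there exists ε > 0 such that every injective holomorphic map G : Ω → ℂᵐ with sup_{z ∈ closure(U)} ‖G(z) − F(z)‖ < ε satisfies Y ⊆ G(U). -/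
/-!
An injective holomorphic map `G` between open subsets of `ℂᵐ` is open (`isOpen_image_of_injOn`).
Granting this, the theorem is a connectedness argument. By injectivity of `F` the compact sets `Y`
and `F '' frontier U` are disjoint, hence have disjoint `δ`-thickenings. If `G` is `δ`-close to `F`
on `closure U` and `y = F z ∈ Y` with `z ∈ U`, the ball of radius `δ` around `y` contains `G z` and
does not meet `G '' frontier U`; being connected it lies in the open set `G '' U`.

Openness is proved by a variant of Osgood's argument. Two facts are needed.

* The Jacobian determinant of an injective holomorphic map cannot vanish on a nonempty open set
  (`exists_det_fderiv_ne_zero`): at a point of maximal rank the map would have fibres of positive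
  dimension.
* A continuous function that is holomorphic off its zeros and vanishes on some open subset of a ball
  vanishes near the centre, provided the open subset is close enough to the centre
  (`eqOn_zero_of_eventually_zero`). This follows from the maximum principle.

Near `G z₀`, consider the Jacobian determinant transported by `G⁻¹` and extended by zero outside
the image of a small closed ball. It is continuous since the boundary of that image consists of
critical values, and holomorphic off its zeros by the inverse function theorem. If the image did not
cover a neighbourhood of `G z₀`, the second fact would make it vanish near `G z₀`, contradicting the
first fact.
-/

open Set

noncomputable section

open Metric Filter Topology

/-! ### Vanishing of functions that are holomorphic off their zero set -/

/-- A weak form of Radó's theorem: a continuous function on a closed disc of radius `R > 1`,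
holomorphic where it does not vanish and zero near the centre, vanishes at `1`. The maximum
principle for `f z / z ^ k` on `{f ≠ 0}` gives `‖f 1‖ ≤ M / R ^ k` for every `k`. -/
theorem eq_zero_of_eventually_zero_of_differentiableAt_ne_zero {f : ℂ → ℂ} {R : ℝ} (hR : 1 < R)
    (hc : ContinuousOn f (closedBall 0 R))
    (hd : ∀ z ∈ ball (0 : ℂ) R, f z ≠ 0 → DifferentiableAt ℂ f z)
    (h0 : ∀ᶠ z in 𝓝 (0 : ℂ), f z = 0) : f 1 = 0 := by
  by_contra h1
  obtain ⟨M, hM⟩ := (isCompact_closedBall (0 : ℂ) R).exists_bound_of_continuousOn hc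
  set V : Set ℂ := ball 0 R ∩ {z | f z ≠ 0} with hV
  have hVo : IsOpen V := (hc.mono ball_subset_closedBall).isOpen_inter_preimage isOpen_ball
    (isOpen_ne (x := (0 : ℂ)))
  have hVcl : closure V ⊆ closedBall 0 R :=
    (closure_mono inter_subset_left).trans closure_ball_subset_closedBall
  -- `V` stays away from the pole of `z⁻¹ ^ k`, because `f` vanishes near `0`.
  have h0V : (0 : ℂ) ∉ closure V := by
    intro h
    rw [mem_closure_iff_frequently] at h
    obtain ⟨z, hz, hz'⟩ := (h.and_eventually h0).exists
    exact hz.2 hz'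
  have h1V : (1 : ℂ) ∈ V := ⟨by simpa using hR, h1⟩
  have hM0 : 0 ≤ M := (norm_nonneg _).trans (hM 0 (by simp; linarith))
  have key : ∀ k : ℕ, ‖f 1‖ ≤ M * (R⁻¹) ^ k := by
    intro k
    have hdc : DiffContOnCl ℂ (fun z => f z * (z⁻¹) ^ k) V := by
      refine ⟨fun z hz => ?_, fun z hz => ?_⟩
      · have : z ≠ 0 := fun h => h0V (h ▸ subset_closure hz)
        exact ((hd z hz.1 hz.2).mul ((differentiableAt_inv this).pow k)).differentiableWithinAt
      · have : z ≠ 0 := fun h => h0V (h ▸ hz)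
        exact ((hc.mono hVcl) z hz).mul
          ((continuousAt_inv₀ this).pow k).continuousWithinAt
    have := Complex.norm_le_of_forall_mem_frontier_norm_le
      (isBounded_ball.subset inter_subset_left) hdc (C := M * (R⁻¹) ^ k) ?_ (subset_closure h1V)
    · simpa using this
    · intro z hz
      rw [hVo.frontier_eq] at hz
      by_cases hfz : f z = 0
      · simp only [hfz, zero_mul, norm_zero]; positivity
      · have hzR : ‖z‖ = R := by
          refine le_antisymm (by simpa using hVcl hz.1) ?_
          by_contra hlt
          exact hz.2 ⟨by simpa using hlt, hfz⟩
        rw [norm_mul, norm_pow, norm_inv, hzR]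
        gcongr
        exact hM z (hVcl hz.1)
  have hlim : Tendsto (fun k : ℕ => M * (R⁻¹) ^ k) atTop (𝓝 (M * 0)) :=
    (tendsto_pow_atTop_nhds_zero_of_lt_one (by positivity) (inv_lt_one_of_one_lt₀ hR)).const_mul M
  have := ge_of_tendsto' hlim key
  simp at this
  exact h1 this

/-- Several-variable version of the previous lemma, by restriction to the complex line through
`a` and `b`. The factor `3` leaves room for a disc centred at `a` that contains `b` in its interior
and lies in the ball where `h` is controlled. -/
theorem eqOn_zero_of_eventually_zero {E : Type*} [NormedAddCommGroup E] [NormedSpace ℂ E]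
    {h : E → ℂ} {c : E} {δ : ℝ} (hc : ContinuousOn h (ball c (3 * δ)))
    (hd : ∀ w ∈ ball c (3 * δ), h w ≠ 0 → DifferentiableAt ℂ h w)
    {a : E} (ha : a ∈ ball c δ) (h0 : ∀ᶠ w in 𝓝 a, h w = 0) {b : E} (hb : b ∈ ball c δ) :
    h b = 0 := by
  by_cases hab : b = a
  · rw [hab]; exact h0.self_of_nhds
  rw [mem_ball] at ha hb
  have hpos : 0 < ‖b - a‖ := norm_pos_iff.2 (sub_ne_zero.2 hab)
  have hlt : ‖b - a‖ < 2 * δ := by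
    rw [← dist_eq_norm]
    linarith [dist_triangle_right b a c]
  obtain ⟨R, hR1, hR2⟩ := exists_between ((one_lt_div hpos).2 hlt)
  rw [lt_div_iff₀ hpos] at hR2
  have hcont : Continuous fun z : ℂ => a + z • (b - a) := by fun_prop
  have hmaps : MapsTo (fun z : ℂ => a + z • (b - a)) (closedBall 0 R) (ball c (3 * δ)) := by
    intro z hz
    rw [mem_closedBall_zero_iff] at hz
    have h1 : dist (a + z • (b - a)) a ≤ R * ‖b - a‖ := by
      rw [dist_eq_norm, add_sub_cancel_left, norm_smul]
      gcongr
    rw [mem_ball]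
    linarith [dist_triangle (a + z • (b - a)) a c]
  have := eq_zero_of_eventually_zero_of_differentiableAt_ne_zero
    (f := fun z : ℂ => h (a + z • (b - a))) hR1 (hc.comp hcont.continuousOn hmaps) ?_ ?_
  · simpa using this
  · intro z hz hne
    exact DifferentiableAt.comp z (hd _ (hmaps (ball_subset_closedBall hz)) hne) (by fun_prop)
  · have : Tendsto (fun z : ℂ => a + z • (b - a)) (𝓝 0) (𝓝 a) := by
      simpa using hcont.tendsto 0
    exact this.eventually h0

/-! ### Regularity of holomorphic maps in several variables -/

section FiniteDimensional
variable {E F : Type*} [NormedAddCommGroup E] [NormedSpace ℂ E] [FiniteDimensional ℂ E]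
  [NormedAddCommGroup F] [NormedSpace ℂ F] [FiniteDimensional ℂ F]

/-- Directional derivatives of a holomorphic map are holomorphic: Cauchy's formula on the line
through `z` in direction `v` represents them as integrals that can be differentiated in `z`. -/
theorem differentiableOn_fderiv_apply {G : E → F} {Ω : Set E} (hΩ : IsOpen Ω)
    (hG : DifferentiableOn ℂ G Ω) (v : E) : DifferentiableOn ℂ (fun z => fderiv ℂ G z v) Ω := by
  intro x₀ hx₀
  refine DifferentiableAt.differentiableWithinAt ?_
  have : ProperSpace E := FiniteDimensional.proper ℂ E
  have : CompleteSpace F := FiniteDimensional.complete ℂ F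
  have : FiniteDimensional ℝ F := FiniteDimensional.complexToReal F
  have hGx := (hG.differentiableAt (hΩ.mem_nhds hx₀)).continuousAt
  obtain ⟨R, hR, hRΩ⟩ : ∃ R > 0, ∀ z ∈ ball x₀ (2 * R), z ∈ Ω ∧ dist (G z) (G x₀) < 1 := by
    obtain ⟨R, hR, h⟩ := Metric.eventually_nhds_iff_ball.1
      ((hΩ.eventually_mem hx₀).and (hGx.eventually (ball_mem_nhds (G x₀) one_pos)))
    exact ⟨R / 2, by positivity, by simpa [mul_div_cancel₀] using h⟩
  -- Cauchy's estimate on the ball of radius `R` around `z`.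
  have hbd : ∀ z ∈ ball x₀ R, ‖fderiv ℂ G z‖ ≤ 2 / R := by
    intro z hz
    have hsub : ball z R ⊆ ball x₀ (2 * R) := ball_subset_ball' (by rw [mem_ball] at hz; linarith)
    refine Complex.norm_fderiv_le_div_of_mapsTo_ball
      (hG.mono fun w hw => (hRΩ w (hsub hw)).1) (fun w hw => ?_) hR
    have h1 := (hRΩ w (hsub hw)).2
    have h2 := (hRΩ z (hsub (mem_ball_self hR))).2
    rw [mem_closedBall]
    linarith [dist_triangle_right (G w) (G z) (G x₀)]
  obtain ⟨r, hr, hrv⟩ : ∃ r : ℝ, 0 < r ∧ r * ‖v‖ < R / 2 := by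
    refine ⟨R / 2 / (‖v‖ + 1), by positivity, ?_⟩
    rw [div_mul_eq_mul_div, div_lt_iff₀ (by positivity)]
    nlinarith [norm_nonneg v]
  have hmem : ∀ x ∈ ball x₀ (R / 2), ∀ ζ : ℂ, ‖ζ‖ ≤ r → x + ζ • v ∈ ball x₀ R := by
    intro x hx ζ hζ
    have : dist (x + ζ • v) x ≤ r * ‖v‖ := by
      rw [dist_eq_norm, add_sub_cancel_left, norm_smul]
      gcongr
    rw [mem_ball] at hx ⊢
    linarith [dist_triangle (x + ζ • v) x x₀]
  have hsubΩ : ball x₀ R ⊆ Ω := fun z hz => (hRΩ z (ball_subset_ball (by linarith) hz)).1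
  have hdiff : ∀ x ∈ ball x₀ (R / 2), ∀ ζ : ℂ, ‖ζ‖ ≤ r →
      DifferentiableAt ℂ G (x + ζ • v) := fun x hx ζ hζ =>
    hG.differentiableAt (hΩ.mem_nhds (hsubΩ (hmem x hx ζ hζ)))
  have hformula : ∀ x ∈ ball x₀ (R / 2), fderiv ℂ G x v =
      (2 * Real.pi * Complex.I : ℂ)⁻¹ • ∫ θ in (0 : ℝ)..2 * Real.pi,
        (deriv (circleMap 0 r) θ * (circleMap 0 r θ ^ 2)⁻¹) • G (x + circleMap 0 r θ • v) := by
    intro x hx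
    have hd : DifferentiableOn ℂ (fun ζ : ℂ => G (x + ζ • v)) (closedBall 0 r) := fun ζ hζ =>
      (DifferentiableAt.comp ζ (hdiff x hx ζ (by simpa using hζ))
        (by fun_prop)).differentiableWithinAt
    have h1 := hd.deriv_eq_smul_circleIntegral hr
    have h2 : HasDerivAt (fun ζ : ℂ => G (x + ζ • v)) (fderiv ℂ G x v) 0 := by
      have h3 : HasDerivAt (fun ζ : ℂ => x + ζ • v) v 0 := by
        simpa using ((hasDerivAt_id (0 : ℂ)).smul_const v).const_add x
      have h4 : HasFDerivAt G (fderiv ℂ G x) (x + (0 : ℂ) • v) := by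
        have := (hdiff x hx 0 (by simpa using hr.le)).hasFDerivAt
        simpa using this
      exact h4.comp_hasDerivAt 0 h3
    rw [circleIntegral] at h1
    rw [← h2.deriv, eq_inv_smul_iff₀ Complex.two_pi_I_ne_zero, ← h1]
    simp [smul_smul]
  suffices h : DifferentiableAt ℂ (fun x => ∫ θ in (0 : ℝ)..2 * Real.pi,
      (deriv (circleMap 0 r) θ * (circleMap 0 r θ ^ 2)⁻¹) • G (x + circleMap 0 r θ • v)) x₀ by
    refine (h.const_smul (2 * Real.pi * Complex.I : ℂ)⁻¹).congr_of_eventuallyEq ?_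
    filter_upwards [ball_mem_nhds x₀ (half_pos hR)] with x hx using hformula x hx
  have hnorm : ∀ θ, ‖circleMap 0 r θ‖ ≤ r := fun θ => by simp [abs_of_pos hr]
  have hk : Continuous fun θ => deriv (circleMap 0 r) θ * (circleMap 0 r θ ^ 2)⁻¹ := by
    have : ∀ θ, circleMap 0 r θ ^ 2 ≠ 0 := fun θ => pow_ne_zero 2 (circleMap_ne_center hr.ne')
    simp only [deriv_circleMap]
    have hcm := continuous_circleMap 0 r
    fun_prop (disch := assumption)
  have hGc : ∀ x ∈ ball x₀ (R / 2), Continuous fun θ =>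
      (deriv (circleMap 0 r) θ * (circleMap 0 r θ ^ 2)⁻¹) • G (x + circleMap 0 r θ • v) := by
    intro x hx
    refine hk.smul (continuous_iff_continuousAt.2 fun θ => ?_)
    have hcm := continuous_circleMap 0 r
    exact ContinuousAt.comp (f := fun θ => x + circleMap 0 r θ • v)
      (hdiff x hx _ (hnorm θ)).continuousAt (by fun_prop)
  have hx₀' : x₀ ∈ ball x₀ (R / 2) := mem_ball_self (half_pos hR)
  refine (intervalIntegral.hasFDerivAt_integral_of_dominated_of_fderiv_le
    (F' := fun x θ => (deriv (circleMap 0 r) θ * (circleMap 0 r θ ^ 2)⁻¹) •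
      fderiv ℂ G (x + circleMap 0 r θ • v))
    (bound := fun θ => ‖deriv (circleMap 0 r) θ * (circleMap 0 r θ ^ 2)⁻¹‖ * (2 / R))
    (ball_mem_nhds x₀ (half_pos hR)) ?_ ?_ ?_ ?_ ?_ ?_).differentiableAt
  · filter_upwards [ball_mem_nhds x₀ (half_pos hR)] with x hx
    exact (hGc x hx).aestronglyMeasurable
  · exact (hGc x₀ hx₀').intervalIntegrable _ _
  · borelize E
    have : ProperSpace (E →L[ℂ] F) := FiniteDimensional.proper ℂ _
    borelize (E →L[ℂ] F)
    have hcm := continuous_circleMap 0 r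
    have hcm' : Continuous fun θ => x₀ + circleMap 0 r θ • v := by fun_prop
    exact hk.aestronglyMeasurable.smul
      ((measurable_fderiv ℂ G).comp hcm'.measurable).stronglyMeasurable.aestronglyMeasurable
  · refine Eventually.of_forall fun θ _ x hx => ?_
    rw [norm_smul]
    gcongr
    exact hbd _ (hmem x hx _ (hnorm θ))
  · exact (hk.norm.mul continuous_const).intervalIntegrable _ _
  · refine Eventually.of_forall fun θ _ x hx => ?_
    refine HasFDerivAt.const_smul ?_ _
    have := (hdiff x hx _ (hnorm θ)).hasFDerivAt
    exact (hasFDerivAt_comp_add_right _).2 this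

theorem contDiffOn_one_of_differentiableOn {G : E → F} {Ω : Set E} (hΩ : IsOpen Ω)
    (hG : DifferentiableOn ℂ G Ω) : ContDiffOn ℂ 1 G Ω := by
  rw [show (1 : WithTop ℕ∞) = 0 + 1 by simp, contDiffOn_succ_iff_fderiv_of_isOpen hΩ]
  refine ⟨hG, by simp, ?_⟩
  rw [contDiffOn_clm_apply]
  exact fun v => contDiffOn_zero.2 (differentiableOn_fderiv_apply hΩ hG v).continuousOn

theorem differentiableOn_det_fderiv {G : E → E} {Ω : Set E} (hΩ : IsOpen Ω)
    (hG : DifferentiableOn ℂ G Ω) : DifferentiableOn ℂ (fun z => (fderiv ℂ G z).det) Ω := by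
  let b := Module.finBasis ℂ E
  have h : ∀ z, (fderiv ℂ G z).det = ((LinearMap.toMatrix b b) (fderiv ℂ G z : E →ₗ[ℂ] E)).det :=
    fun z => (LinearMap.det_toMatrix b _).symm
  simp only [h, Matrix.det_apply, LinearMap.toMatrix_apply]
  refine DifferentiableOn.fun_sum fun σ _ => DifferentiableOn.const_smul ?_ _
  have hent : ∀ i, DifferentiableOn ℂ (fun z => b.repr (fderiv ℂ G z (b i)) (σ i)) Ω := fun i =>
    (LinearMap.toContinuousLinearMap (b.coord (σ i))).differentiable.comp_differentiableOn
      (differentiableOn_fderiv_apply hΩ hG (b i))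
  exact fun z hz => (HasFDerivWithinAt.finsetProd fun i _ =>
    (hent i z hz).hasFDerivWithinAt).differentiableWithinAt

/-! ### Osgood's theorem -/

/-- The Jacobian determinant of an injective holomorphic map does not vanish identically on a
nonempty open set. Otherwise the map would be constant on positive-dimensional fibres near a point
where its derivative has maximal rank (constant rank theorem). -/
theorem exists_det_fderiv_ne_zero {G : E → E} {N : Set E} (hN : IsOpen N) (hne : N.Nonempty)
    (hG : DifferentiableOn ℂ G N) (hinj : InjOn G N) : ∃ z ∈ N, (fderiv ℂ G z).det ≠ 0 := by
  by_contra! hdet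
  have hG1 := contDiffOn_one_of_differentiableOn hN hG
  obtain ⟨z₁, hz₁, hmax⟩ : ∃ z₁ ∈ N, ∀ z ∈ N, Module.finrank ℂ (fderiv ℂ G z).range ≤
      Module.finrank ℂ (fderiv ℂ G z₁).range := by
    have hbdd : BddAbove ((fun z => Module.finrank ℂ (fderiv ℂ G z).range) '' N) := by
      refine ⟨Module.finrank ℂ E, ?_⟩
      rintro _ ⟨z, -, rfl⟩
      exact Submodule.finrank_le _
    obtain ⟨z₁, hz₁, h⟩ := Nat.sSup_mem (hne.image _) hbdd
    exact ⟨z₁, hz₁, fun z hz => (le_csSup hbdd (mem_image_of_mem _ hz)).trans_eq h.symm⟩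
  set A := fderiv ℂ G z₁ with hA
  have hk : ∃ k : A.ker, k ≠ 0 := by
    have hlt : ⊥ < A.ker := LinearMap.bot_lt_ker_of_det_eq_zero (hdet z₁ hz₁)
    obtain ⟨k, hk, hk0⟩ := Submodule.exists_mem_ne_zero_of_ne_bot hlt.ne'
    exact ⟨⟨k, hk⟩, fun h => hk0 (congrArg Subtype.val h)⟩
  obtain ⟨k, hk⟩ := hk
  -- `P` and `Q` are linear projections onto the range and the kernel of `A`; in the coordinates
  -- `z ↦ (P (G z), Q z)` the map `G` turns out to be independent of the second one.
  obtain ⟨P₀, hP₀⟩ := A.range.subtype.exists_leftInverse_of_injective A.range.ker_subtype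
  obtain ⟨Q₀, hQ₀⟩ := A.ker.subtype.exists_leftInverse_of_injective A.ker.ker_subtype
  set P : E →L[ℂ] A.range := LinearMap.toContinuousLinearMap P₀ with hP
  set Q : E →L[ℂ] A.ker := LinearMap.toContinuousLinearMap Q₀ with hQ
  have hPA : ∀ v, ((P (A v) : A.range) : E) = A v := fun v =>
    congrArg Subtype.val (LinearMap.congr_fun hP₀ (⟨A v, v, rfl⟩ : A.range))
  have hQk : ∀ v : A.ker, Q (v : E) = v := fun v => LinearMap.congr_fun hQ₀ v
  let L₀ : E →L[ℂ] A.range × A.ker := (P.comp A).prod Q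
  have hL₀ : Function.Bijective L₀ := by
    constructor
    · rw [injective_iff_map_eq_zero]
      intro v hv
      have h1 : P (A v) = 0 := congrArg Prod.fst hv
      have h2 : Q v = 0 := congrArg Prod.snd hv
      have h3 : A v = 0 := by rw [← hPA, h1]; rfl
      have h4 := hQk ⟨v, h3⟩
      rw [h2] at h4
      exact congrArg Subtype.val h4.symm
    · rintro ⟨⟨_, v, rfl⟩, κ⟩
      have hker : A ((κ - Q v : A.ker) : E) = 0 := (κ - Q v : A.ker).2
      refine ⟨v + (κ - Q v : A.ker), Prod.ext (Subtype.ext ?_) ?_⟩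
      · change ((P (A _) : A.range) : E) = _
        rw [hPA, map_add, hker, add_zero]
        rfl
      · change Q _ = κ
        rw [map_add, hQk]
        simp
  let L : E ≃L[ℂ] A.range × A.ker :=
    (LinearEquiv.ofBijective (L₀ : E →ₗ[ℂ] A.range × A.ker) hL₀).toContinuousLinearEquiv
  have hL : (L : E →L[ℂ] A.range × A.ker) = L₀ := rfl
  have : CompleteSpace E := FiniteDimensional.complete ℂ E
  let Φ : E → A.range × A.ker := fun z => (P (G z), Q z)
  have hGat : ContDiffAt ℂ 1 G z₁ := hG1.contDiffAt (hN.mem_nhds hz₁)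
  have hΦ : ContDiffAt ℂ 1 Φ z₁ :=
    (P.contDiff.contDiffAt.comp z₁ hGat).prodMk Q.contDiff.contDiffAt
  have hΦ' : HasFDerivAt Φ (L : E →L[ℂ] A.range × A.ker) z₁ := by
    rw [hL]
    exact (P.hasFDerivAt.comp z₁ (hGat.differentiableAt one_ne_zero).hasFDerivAt).prodMk
      Q.hasFDerivAt
  let e := hΦ.toOpenPartialHomeomorph Φ hΦ' one_ne_zero
  have heΦ : ∀ z, e z = Φ z := fun _ => rfl
  have hzs : z₁ ∈ e.source := hΦ.mem_toOpenPartialHomeomorph_source hΦ' one_ne_zero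
  have hzt : Φ z₁ ∈ e.target := hΦ.image_mem_toOpenPartialHomeomorph_target hΦ' one_ne_zero
  have hez : e.symm (Φ z₁) = z₁ := e.left_inv hzs
  have hψ : ContDiffAt ℂ 1 e.symm (Φ z₁) := by
    refine e.contDiffAt_symm hzt (f₀' := L) ?_ ?_
    · rw [hez]; exact hΦ'
    · rw [hez]; exact hΦ
  have hnear : ∀ᶠ y in 𝓝 (Φ z₁), DifferentiableAt ℂ e.symm y ∧ e.symm y ∈ N ∧ y ∈ e.target := by
    filter_upwards [hψ.eventually (by simp), e.open_target.mem_nhds hzt,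
      (hψ.continuousAt).eventually (by rw [hez]; exact hN.mem_nhds hz₁)] with y h1 h2 h3
    exact ⟨h1.differentiableAt one_ne_zero, h3, h2⟩
  have hzero : ∀ᶠ y in 𝓝 (Φ z₁), e.symm y ∈ N ∧ y ∈ e.target ∧
      DifferentiableAt ℂ (fun y => G (e.symm y)) y ∧
      ∀ κ : A.ker, fderiv ℂ (fun y => G (e.symm y)) y (0, κ) = 0 := by
    filter_upwards [hnear.eventually_nhds] with y hy
    obtain ⟨hd, hyN, hyt⟩ := hy.self_of_nhds
    have hGd : DifferentiableAt ℂ G (e.symm y) := hG.differentiableAt (hN.mem_nhds hyN)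
    have hcomp : HasFDerivAt (fun y => G (e.symm y))
        ((fderiv ℂ G (e.symm y)).comp (fderiv ℂ e.symm y)) y :=
      hGd.hasFDerivAt.comp y hd.hasFDerivAt
    refine ⟨hyN, hyt, hcomp.differentiableAt, fun κ => ?_⟩
    rw [hcomp.fderiv]
    set B := fderiv ℂ G (e.symm y) with hB
    set D := fderiv ℂ e.symm y with hD
    have hfst : ∀ p, P (B (D p)) = p.1 := by
      have h1 : HasFDerivAt (fun y => P (G (e.symm y))) (P.comp (B.comp D)) y :=
        P.hasFDerivAt.comp y hcomp
      have h2 : HasFDerivAt (fun y : A.range × A.ker => y.1)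
        (ContinuousLinearMap.fst ℂ A.range A.ker) y := hasFDerivAt_fst
      have h3 : (fun y => P (G (e.symm y))) =ᶠ[𝓝 y] fun y => y.1 := by
        filter_upwards [hy] with y' hy'
        exact congrArg Prod.fst (e.right_inv hy'.2.2)
      have h4 := h1.unique (h2.congr_of_eventuallyEq h3)
      intro p
      exact DFunLike.congr_fun h4 p
    -- Maximality of the rank of `A` makes `P` injective on the range of `B`, so that
    -- `P (B (D (0, κ))) = 0` forces `B (D (0, κ)) = 0`.
    let R : B.range →ₗ[ℂ] A.range := (P : E →ₗ[ℂ] A.range).domRestrict B.range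
    have hRsurj : Function.Surjective R := fun v => ⟨⟨B (D (v, 0)), _, rfl⟩, hfst (v, 0)⟩
    have hfin : Module.finrank ℂ B.range = Module.finrank ℂ A.range :=
      le_antisymm (hmax _ hyN) (LinearMap.finrank_le_finrank_of_surjective hRsurj)
    have hRinj : Function.Injective R :=
      (LinearMap.injective_iff_surjective_of_finrank_eq_finrank hfin).2 hRsurj
    have h5 : (⟨B (D (0, κ)), _, rfl⟩ : B.range) = 0 := hRinj (by
      rw [map_zero]; exact hfst (0, κ))
    exact congrArg Subtype.val h5
  obtain ⟨ε, hε, hball⟩ := Metric.eventually_nhds_iff_ball.1 hzero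
  set p := Φ z₁ with hp
  have hmem : ∀ κ ∈ ball p.2 ε, (p.1, κ) ∈ ball p ε := by
    intro κ hκ
    rw [mem_ball, Prod.dist_eq]
    simpa [hε] using hκ
  have hder : ∀ κ ∈ ball p.2 ε, HasFDerivAt (fun κ => G (e.symm (p.1, κ)))
      (0 : A.ker →L[ℂ] E) κ := by
    intro κ hκ
    obtain ⟨-, -, h1, h2⟩ := hball _ (hmem κ hκ)
    have h3 := h1.hasFDerivAt.comp κ (hasFDerivAt_prodMk_right p.1 κ)
    exact h3.congr_fderiv (ContinuousLinearMap.ext h2)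
  have hconst : ∀ κ ∈ ball p.2 ε, ∀ κ' ∈ ball p.2 ε,
      G (e.symm (p.1, κ)) = G (e.symm (p.1, κ')) := fun κ hκ κ' hκ' =>
    isOpen_ball.is_const_of_fderiv_eq_zero (𝕜 := ℂ) (convex_ball p.2 ε).isPreconnected
      (fun x hx => (hder x hx).differentiableAt.differentiableWithinAt)
      (fun x hx => (hder x hx).fderiv) hκ hκ'
  obtain ⟨t, ht0, ht⟩ : ∃ t : ℝ, 0 < t ∧ t * ‖k‖ < ε := by
    refine ⟨ε / 2 / ‖k‖, by positivity, ?_⟩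
    rw [div_mul_cancel₀ _ (norm_ne_zero_iff.2 hk)]
    linarith
  have hp2 : p.2 ∈ ball p.2 ε := mem_ball_self hε
  have hp3 : p.2 + (t : ℂ) • k ∈ ball p.2 ε := by
    rw [mem_ball, dist_eq_norm, add_sub_cancel_left, norm_smul]
    simpa [abs_of_pos ht0] using ht
  have h6 := hinj (hball _ (hmem _ hp2)).1 (hball _ (hmem _ hp3)).1 (hconst _ hp2 _ hp3)
  have h7 := e.symm.injOn (hball _ (hmem _ hp2)).2.1 (hball _ (hmem _ hp3)).2.1 h6
  have h8 : p.2 = p.2 + (t : ℂ) • k := congrArg Prod.snd h7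
  have h9 : (t : ℂ) • k = 0 := by simpa using h8
  rcases smul_eq_zero.1 h9 with h | h
  · exact ht0.ne' (by exact_mod_cast h)
  · exact hk h

/-- An injective holomorphic map is open at every point. On a ball around `G z₀` that avoids the
image of a small sphere, the Jacobian determinant transported by `G⁻¹` and extended by zero outside
the image is continuous and holomorphic off its zeros. If the image were not a neighbourhood, this
function would vanish on an open set, hence near `G z₀`, and the Jacobian determinant would vanish
identically near `z₀`. -/
theorem image_mem_nhds_of_injOn {G : E → E} {Ω : Set E} (hΩ : IsOpen Ω)
    (hG : DifferentiableOn ℂ G Ω) (hinj : InjOn G Ω) {z₀ : E} (hz₀ : z₀ ∈ Ω) :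
    G '' Ω ∈ 𝓝 (G z₀) := by
  have : ProperSpace E := FiniteDimensional.proper ℂ E
  have : CompleteSpace E := FiniteDimensional.complete ℂ E
  obtain ⟨ρ, hρ, hρΩ⟩ := nhds_basis_closedBall.mem_iff.1 (hΩ.mem_nhds hz₀)
  set K := closedBall z₀ ρ with hK
  refine mem_of_superset ?_ (image_mono hρΩ)
  have hGK : ContinuousOn G K := hG.continuousOn.mono hρΩ
  have hKc : IsCompact K := isCompact_closedBall z₀ ρ
  have hinjK : InjOn G K := hinj.mono hρΩ
  have hGKclosed : IsClosed (G '' K) := (hKc.image_of_continuousOn hGK).isClosed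
  have hSc : IsClosed (G '' sphere z₀ ρ) := ((isCompact_sphere z₀ ρ).image_of_continuousOn
    (hGK.mono sphere_subset_closedBall)).isClosed
  have hz₀S : G z₀ ∉ G '' sphere z₀ ρ := by
    rintro ⟨z, hz, hzz⟩
    rw [hinjK (sphere_subset_closedBall hz) (mem_closedBall_self hρ.le) hzz] at hz
    simp at hz
    exact hρ.ne hz
  obtain ⟨δ', hδ', hball⟩ := Metric.isOpen_iff.1 hSc.isOpen_compl _ hz₀S
  obtain ⟨δ, rfl⟩ : ∃ δ, δ' = 3 * δ := ⟨δ' / 3, by ring⟩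
  have hδ : 0 < δ := by linarith
  let g := Function.invFunOn G K
  have hgl : ∀ z ∈ K, g (G z) = z := fun z hz => hinjK.leftInvOn_invFunOn hz
  have hgc : ContinuousOn g (G '' K) := by
    rw [continuousOn_iff_isClosed]
    intro C hC
    refine ⟨G '' (K ∩ C), ((hKc.inter_right hC).image_of_continuousOn
      (hGK.mono inter_subset_left)).isClosed, ?_⟩
    ext w
    constructor
    · rintro ⟨hw, z, hz, rfl⟩
      rw [mem_preimage, hgl z hz] at hw
      exact ⟨⟨z, ⟨hz, hw⟩, rfl⟩, z, hz, rfl⟩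
    · rintro ⟨⟨z, ⟨hz, hzC⟩, rfl⟩, -⟩
      exact ⟨by rwa [mem_preimage, hgl z hz], z, hz, rfl⟩
  let J : E → ℂ := fun z => (fderiv ℂ G z).det
  have hJ : DifferentiableOn ℂ J Ω := differentiableOn_det_fderiv hΩ hG
  have hGC1 := contDiffOn_one_of_differentiableOn hΩ hG
  classical
  let h : E → ℂ := fun w => if w ∈ G '' K then J (g w) else 0
  have hin : ∀ z ∈ K, h (G z) = J z := fun z hz => by
    simp only [h, if_pos (mem_image_of_mem G hz), hgl z hz]
  have hdiff : ∀ z ∈ ball z₀ ρ, J z ≠ 0 → DifferentiableAt ℂ h (G z) := by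
    intro z hz hJz
    have hzK := ball_subset_closedBall hz
    have hzΩ := hρΩ hzK
    let f' := (fderiv ℂ G z).toContinuousLinearEquivOfDetNeZero hJz
    have hf' : (f' : E →L[ℂ] E) = fderiv ℂ G z := by ext; rfl
    have hGz : ContDiffAt ℂ 1 G z := hGC1.contDiffAt (hΩ.mem_nhds hzΩ)
    have hs : HasStrictFDerivAt G (f' : E →L[ℂ] E) z := by
      rw [hf']; exact hGz.hasStrictFDerivAt one_ne_zero
    have hnhds : G '' K ∈ 𝓝 (G z) := by
      rw [← hs.map_nhds_eq_of_equiv]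
      exact image_mem_map (mem_of_superset (isOpen_ball.mem_nhds hz) ball_subset_closedBall)
    have hgat : ContinuousAt g (G z) := hgc.continuousAt hnhds
    have hgd : DifferentiableAt ℂ g (G z) := by
      refine (HasFDerivAt.of_local_left_inverse (f := G) (f' := f') hgat ?_ ?_).differentiableAt
      · rw [hgl z hzK]; exact hs.hasFDerivAt
      · filter_upwards [hnhds] with w hw
        exact Function.invFunOn_eq hw
    have hcomp : DifferentiableAt ℂ (fun w => J (g w)) (G z) := by
      refine DifferentiableAt.comp (g := J) (G z) ?_ hgd
      rw [hgl z hzK]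
      exact hJ.differentiableAt (hΩ.mem_nhds hzΩ)
    refine hcomp.congr_of_eventuallyEq ?_
    filter_upwards [hnhds] with w hw using if_pos hw
  have hmem : ∀ w ∈ ball (G z₀) (3 * δ), w ∈ G '' K → ∃ z ∈ ball z₀ ρ, G z = w := by
    rintro _ hw ⟨z, hz, rfl⟩
    refine ⟨z, ?_, rfl⟩
    rw [hK, ← ball_union_sphere] at hz
    exact hz.resolve_right fun hzS => hball hw ⟨z, hzS, rfl⟩
  have hout : ∀ w, w ∉ G '' K → ∀ᶠ w' in 𝓝 w, h w' = 0 := by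
    intro w hw
    filter_upwards [hGKclosed.isOpen_compl.mem_nhds hw] with w' hw' using if_neg hw'
  have hcont : ContinuousOn h (ball (G z₀) (3 * δ)) := by
    intro w hw
    refine ContinuousAt.continuousWithinAt ?_
    by_cases hwK : w ∈ G '' K
    · obtain ⟨z, hz, rfl⟩ := hmem w hw hwK
      -- Only at critical values does continuity need the two sides of `G '' K` separately.
      by_cases hJz : J z = 0
      · rw [← continuousWithinAt_univ, ← union_compl_self (G '' K)]
        have hzK := ball_subset_closedBall hz
        refine ContinuousWithinAt.union ?_ ?_
        · have h1 : ContinuousWithinAt (fun w => J (g w)) (G '' K) (G z) := by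
            refine ContinuousAt.comp_continuousWithinAt (g := J) ?_ (hgc _ hwK)
            rw [hgl z hzK]
            exact (hJ.differentiableAt (hΩ.mem_nhds (hρΩ hzK))).continuousAt
          exact h1.congr (fun w hw => if_pos hw) (if_pos hwK)
        · refine (continuousWithinAt_const (b := (0 : ℂ))).congr (fun w hw => if_neg hw) ?_
          rw [hin z hzK, hJz]
      · exact (hdiff z hz hJz).continuousAt
    · exact (continuousAt_const (y := (0 : ℂ))).congr ((hout w hwK).mono fun _ h => h.symm)
  have hd : ∀ w ∈ ball (G z₀) (3 * δ), h w ≠ 0 → DifferentiableAt ℂ h w := by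
    intro w hw hne
    by_cases hwK : w ∈ G '' K
    · obtain ⟨z, hz, rfl⟩ := hmem w hw hwK
      rw [hin z (ball_subset_closedBall hz)] at hne
      exact hdiff z hz hne
    · exact absurd (if_neg hwK) hne
  by_contra hnot
  obtain ⟨a, ha, haK⟩ : ∃ a ∈ ball (G z₀) δ, a ∉ G '' K := by
    by_contra! hall
    exact hnot (mem_of_superset (ball_mem_nhds _ hδ) hall)
  have hN : IsOpen (ball z₀ ρ ∩ G ⁻¹' ball (G z₀) δ) :=
    (hGK.mono ball_subset_closedBall).isOpen_inter_preimage isOpen_ball isOpen_ball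
  have hNΩ : ball z₀ ρ ∩ G ⁻¹' ball (G z₀) δ ⊆ Ω :=
    inter_subset_left.trans (ball_subset_closedBall.trans hρΩ)
  obtain ⟨z, hz, hJz⟩ := exists_det_fderiv_ne_zero hN
    ⟨z₀, mem_ball_self hρ, mem_ball_self hδ⟩ (hG.mono hNΩ) (hinj.mono hNΩ)
  refine hJz ?_
  have := eqOn_zero_of_eventually_zero hcont hd ha (hout a haK) hz.2
  rwa [hin z (ball_subset_closedBall hz.1)] at this

theorem isOpen_image_of_injOn {G : E → E} {Ω : Set E} (hΩ : IsOpen Ω)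
    (hG : DifferentiableOn ℂ G Ω) (hinj : InjOn G Ω) : IsOpen (G '' Ω) := by
  rw [isOpen_iff_mem_nhds]
  rintro _ ⟨z, hz, rfl⟩
  exact image_mem_nhds_of_injOn hΩ hG hinj hz

end FiniteDimensional

/-! ### Stability of coverage -/

/-- Stability of coverage under small perturbations: if `F : Ω → ℂᵐ` is injective and
holomorphic on an open set `Ω ⊆ ℂᵐ`, `U` is an open set with compact closure contained
in `Ω`, and `Y` is a compact set with `Y ⊆ F(U)`, then every injective holomorphic map
`G : Ω → ℂᵐ` sufficiently uniformly close to `F` on the closure of `U` also satisfies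
`Y ⊆ G(U)`. -/
theorem stmt13 (m : ℕ) (Ω : Set (EuclideanSpace ℂ (Fin m))) (hΩ : IsOpen Ω)
    (F : EuclideanSpace ℂ (Fin m) → EuclideanSpace ℂ (Fin m))
    (hFinj : InjOn F Ω) (hFholo : DifferentiableOn ℂ F Ω)
    (U : Set (EuclideanSpace ℂ (Fin m))) (hU : IsOpen U)
    (hUc : IsCompact (closure U)) (hUΩ : closure U ⊆ Ω)
    (Y : Set (EuclideanSpace ℂ (Fin m))) (hY : IsCompact Y) (hYF : Y ⊆ F '' U) :
    ∃ ε : ℝ, 0 < ε ∧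
      ∀ G : EuclideanSpace ℂ (Fin m) → EuclideanSpace ℂ (Fin m),
        InjOn G Ω → DifferentiableOn ℂ G Ω →
        (∀ z ∈ closure U, ‖G z - F z‖ < ε) → Y ⊆ G '' U := by
  have hfr : frontier U ⊆ closure U := frontier_subset_closure
  have hFfr : IsClosed (F '' frontier U) :=
    ((hUc.of_isClosed_subset isClosed_frontier hfr).image_of_continuousOn
      (hFholo.continuousOn.mono (hfr.trans hUΩ))).isClosed
  have hdisj : Disjoint Y (F '' frontier U) := by
    rw [Set.disjoint_left]
    rintro y hy ⟨z, hz, rfl⟩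
    obtain ⟨z', hz', hzz'⟩ := hYF hy
    rw [hFinj (hUΩ (subset_closure hz')) (hUΩ (hfr hz)) hzz'] at hz'
    rw [hU.frontier_eq] at hz
    exact absurd hz' hz.2
  -- `Y` and `F '' frontier U` have disjoint `δ`-thickenings, so the ball of radius `δ` around a point
  -- of `Y` cannot meet `G '' frontier U` when `G` is `δ`-close to `F`.
  obtain ⟨δ, hδ, hδd⟩ := hdisj.exists_thickenings hY hFfr
  refine ⟨δ, hδ, fun G hGinj hG hclose y hy => ?_⟩
  have hUΩ' : U ⊆ Ω := subset_closure.trans hUΩ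
  have hopen : IsOpen (G '' U) := isOpen_image_of_injOn hU (hG.mono hUΩ') (hGinj.mono hUΩ')
  have hcl : IsClosed (G '' closure U) :=
    (hUc.image_of_continuousOn (hG.continuousOn.mono hUΩ)).isClosed
  have hnofr : ∀ z ∈ frontier U, G z ∉ ball y δ := by
    intro z hz hzy
    refine Set.disjoint_left.1 hδd (Metric.mem_thickening_iff.2 ⟨y, hy, hzy⟩)
      (Metric.mem_thickening_iff.2 ⟨F z, mem_image_of_mem F hz, ?_⟩)
    rw [dist_eq_norm]
    exact hclose z (hfr hz)
  obtain ⟨z, hz, rfl⟩ := hYF hy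
  -- The ball is connected, meets `G '' U` in `G z`, and avoids the boundary of `G '' U`.
  have hsub := (isPreconnected_iff_subset_of_disjoint.1 (convex_ball (F z) δ).isPreconnected)
    (G '' U) (G '' closure U)ᶜ hopen hcl.isOpen_compl ?_ ?_
  · rcases hsub with h | h
    · exact h (mem_ball_self hδ)
    · refine absurd (mem_image_of_mem G (subset_closure hz)) (h ?_)
      rw [mem_ball, dist_eq_norm]
      exact hclose z (subset_closure hz)
  · intro w hw
    by_cases hwc : w ∈ G '' closure U
    · obtain ⟨z', hz', rfl⟩ := hwc
      refine Or.inl ⟨z', ?_, rfl⟩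
      by_contra hz'U
      exact hnofr z' (by rw [hU.frontier_eq]; exact ⟨hz', hz'U⟩) hw
    · exact Or.inr hwc
  · rw [eq_empty_iff_forall_notMem]
    rintro w ⟨-, h1, h2⟩
    exact h2 (image_mono subset_closure h1)
end
end
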